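/- arXiv:1007.0157 — 2 statements merged into one kernel-verified Lean document; each statement's English description precedes it below -/
import Mathlib

section
/- Every free group is 2-order separable: for any two elements u, v of a free group F such that u is conjugate to neither v nor v⁻¹, there exists a homomorphism φ of F onto a finite group with |φ(u)| ≠ |φ(v)|. -/
open FreeGroup in
theorem fg_center_trivial {X : Type*} {a b : X} (hab : a ≠ b) (z : FreeGroup X)
    (hz : ∀ w, Commute z w) : z = 1 := by
  classical
  by_contra hne
  have hL : z.toWord ≠ [] := by simpa [toWord_eq_nil_iff] using hne
  have hred : IsReduced z.toWord := isReduced_toWord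
  obtain ⟨f, T, hT⟩ := List.exists_cons_of_ne_nil hL
  obtain ⟨I, l, hI⟩ := (List.eq_nil_or_concat' z.toWord).resolve_left hL
  -- choose a letter
  obtain ⟨x, hx⟩ : ∃ x : X, x ≠ f.1 := by
    by_cases h : a = f.1
    · exact ⟨b, fun h' => hab (h.trans h'.symm)⟩
    · exact ⟨a, h⟩
  obtain ⟨y, hy1, hy2⟩ : ∃ y : X × Bool, y.1 ≠ f.1 ∧ (l.1 = y.1 → l.2 = y.2) := by
    exact ⟨(x, l.2), hx, fun _ => rfl⟩
  have h1 : IsReduced (y :: z.toWord) := by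
    rw [hT] at hred ⊢
    rw [isReduced_cons_cons]
    exact ⟨fun h => absurd h hy1, hred⟩
  have h2 : IsReduced (z.toWord ++ [y]) := by
    rw [hI] at hred ⊢
    unfold FreeGroup.IsReduced at *
    rw [List.isChain_append]
    refine ⟨hred, by simp, ?_⟩
    intro p hp q hq
    simp at hp hq
    subst hp; subst hq
    exact hy2
  have h3 := hz (mk [y])
  have h4 : mk (z.toWord ++ [y]) = mk (y :: z.toWord) := by
    have := h3.eq
    rw [← mk_toWord (x := z), mul_mk, mul_mk] at this
    simpa using this
  have h5 := reduce.sound h4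
  rw [h1.reduce_eq, h2.reduce_eq, hT] at h5
  simp at h5
  exact hy1 (by rw [h5.1])

theorem fg_centralizer {X : Type} (u : FreeGroup X) (hu : u ≠ 1) :
    ∃ r : FreeGroup X, ∀ w, Commute w u ↔ w ∈ Subgroup.zpowers r := by
  classical
  let C := Subgroup.centralizer {u}
  have hC : ∀ w, w ∈ C ↔ Commute w u := fun w => by
    simp only [C, Subgroup.mem_centralizer_singleton_iff]
    exact ⟨fun h => h, fun h => h⟩
  let e : C ≃* FreeGroup (IsFreeGroup.Generators C) := IsFreeGroup.toFreeGroup C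
  let u' : C := ⟨u, (hC u).2 (Commute.refl u)⟩
  have hu' : u' ≠ 1 := fun h => hu (congrArg Subtype.val h)
  have hsub : Subsingleton (IsFreeGroup.Generators C) := by
    refine ⟨fun a b => ?_⟩
    by_contra hab
    apply hu'
    apply e.injective
    rw [map_one]
    apply fg_center_trivial hab
    intro w
    have : Commute u' (e.symm w) := by
      have := (hC _).1 (e.symm w).2
      exact Subtype.ext this.eq.symm
    have := this.map e
    simpa using this
  have hcyc : IsCyclic C := by
    rcases isEmpty_or_nonempty (IsFreeGroup.Generators C) with h | ⟨⟨a⟩⟩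
    · have : Subsingleton C := e.toEquiv.subsingleton
      infer_instance
    · have : Unique (IsFreeGroup.Generators C) := uniqueOfSubsingleton a
      exact isCyclic_of_surjective e.symm e.symm.surjective
  obtain ⟨r, hr⟩ := hcyc.exists_generator
  refine ⟨r, fun w => ?_⟩
  rw [← hC]
  constructor
  · intro hw
    obtain ⟨k, hk⟩ := hr ⟨w, hw⟩
    exact ⟨k, by simpa using congrArg Subtype.val hk⟩
  · rintro ⟨k, rfl⟩
    exact C.zpow_mem r.2 k

theorem fg_comm_trans {X : Type} {u a b : FreeGroup X} (hu : u ≠ 1) (ha : Commute a u)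
    (hb : Commute b u) : Commute a b := by
  obtain ⟨r, hr⟩ := fg_centralizer u hu
  obtain ⟨i, rfl⟩ := (hr a).1 ha
  obtain ⟨j, rfl⟩ := (hr b).1 hb
  exact (Commute.refl r).zpow_zpow i j

theorem fg_zpow_ne {X : Type} {u : FreeGroup X} (hu : u ≠ 1) {k : ℤ} (hk : k ≠ 0) :
    u ^ k ≠ 1 := by
  simpa [hk] using hu

theorem fg_pow_ne {X : Type} {u : FreeGroup X} (hu : u ≠ 1) {k : ℕ} (hk : k ≠ 0) :
    u ^ k ≠ 1 := by
  simpa [hk] using hu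

/-- A root: nontrivial element generating its own centralizer. -/
def IsRt {X : Type} (r : FreeGroup X) : Prop :=
  r ≠ 1 ∧ ∀ w, Commute w r → w ∈ Subgroup.zpowers r

theorem fg_exists_root {X : Type} (u : FreeGroup X) (hu : u ≠ 1) :
    ∃ r : FreeGroup X, IsRt r ∧ ∃ k : ℤ, k ≠ 0 ∧ r ^ k = u := by
  obtain ⟨r, hr⟩ := fg_centralizer u hu
  obtain ⟨k, hk⟩ := (hr u).1 (Commute.refl u)
  have hk' : r ^ k = u := hk
  have hr1 : r ≠ 1 := by rintro rfl; simp at hk'; exact hu hk'.symm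
  refine ⟨r, ⟨hr1, fun w hw => ?_⟩, k, ?_, hk'⟩
  · rw [← hr, ← hk']
    exact hw.zpow_right k
  · rintro rfl
    simp at hk'; exact hu hk'.symm

/-- if powers of roots commute then the roots agree up to inversion -/
theorem fg_root_eq {X : Type} {r s : FreeGroup X} (hr : IsRt r) (hs : IsRt s)
    (h : Commute r s) : r = s ∨ r = s⁻¹ := by
  obtain ⟨i, hi⟩ := hs.2 r h
  obtain ⟨j, hj⟩ := hr.2 s h.symm
  have hi' : s ^ i = r := hi
  have hj' : r ^ j = s := hj
  have h1 : r ^ (j * i) = r ^ (1 : ℤ) := by rw [zpow_mul, hj', hi', zpow_one]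
  have h2 : r ^ (j * i - 1) = 1 := by rw [zpow_sub, h1]; simp
  have h3 : j * i - 1 = 0 := by
    by_contra h; exact fg_zpow_ne hr.1 h h2
  have h4 : i * j = 1 := by linarith
  rcases Int.eq_one_or_neg_one_of_mul_eq_one h4 with rfl | rfl
  · left; simpa using hi'.symm
  · right; simpa using hi'.symm

theorem isRt_conj {X : Type} {r : FreeGroup X} (hr : IsRt r) (g : FreeGroup X) :
    IsRt (g * r * g⁻¹) := by
  refine ⟨fun h => hr.1 ?_, fun w hw => ?_⟩
  · simpa using h
  · have : Commute (g⁻¹ * w * g) r := by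
      have h2 := hw.eq
      unfold Commute SemiconjBy
      calc g⁻¹ * w * g * r = g⁻¹ * (w * (g * r * g⁻¹)) * g := by group
        _ = _ := by rw [h2]; group
    obtain ⟨k, hk⟩ := hr.2 _ this
    refine ⟨k, ?_⟩
    have hk' : r ^ k = g⁻¹ * w * g := hk
    change (g * r * g⁻¹) ^ k = w
    rw [conj_zpow, hk']; group

/-- conjugates of roots not inverse-conjugate have noncommuting powers -/
theorem fg_noncomm {X : Type} {r s : FreeGroup X} (hr : IsRt r) (hs : IsRt s)
    (e f : FreeGroup X) (d : ℕ) (hd : d ≠ 0)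
    (h : Commute (e * r ^ d * e⁻¹) (f * s * f⁻¹)) :
    e * r * e⁻¹ = f * s * f⁻¹ ∨ e * r * e⁻¹ = (f * s * f⁻¹)⁻¹ := by
  have hr' := isRt_conj hr e
  have hs' := isRt_conj hs f
  apply fg_root_eq hr' hs'
  rw [← conj_pow] at h
  exact fg_comm_trans (fg_pow_ne hr'.1 hd) ((Commute.refl _).pow_right d) h.symm

theorem fg_inv_conj {X : Type} {r e : FreeGroup X} (hr : IsRt r)
    (h : e * r * e⁻¹ = r ∨ e * r * e⁻¹ = r⁻¹) : e ∈ Subgroup.zpowers r := by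
  apply hr.2
  rcases h with h | h
  · exact mul_inv_eq_iff_eq_mul.1 h
  · by_cases he : e = 1
    · subst he; exact Commute.one_left r
    have h2 : e ^ 2 * r * (e ^ 2)⁻¹ = r := by
      have : e ^ 2 * r * (e ^ 2)⁻¹ = e * (e * r * e⁻¹) * e⁻¹ := by
        rw [pow_two]; group
      rw [this, h, show e * r⁻¹ * e⁻¹ = (e * r * e⁻¹)⁻¹ by group, h, inv_inv]
    have h3 : Commute (e ^ 2) r := mul_inv_eq_iff_eq_mul.1 h2
    exact fg_comm_trans (fg_pow_ne he two_ne_zero) ((Commute.refl e).pow_right 2) h3.symm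

theorem exists_perm_extend {X : Type} [Finite X] (R : X → X → Prop)
    (h1 : ∀ p q q', R p q → R p q' → q = q') (h2 : ∀ p p' q, R p q → R p' q → p = p') :
    ∃ σ : Equiv.Perm X, ∀ p q, R p q → σ p = q := by
  classical
  have := Fintype.ofFinite X
  let s : Set X := {p | ∃ q, R p q}
  let f : X → X := fun p => if h : ∃ q, R p q then h.choose else p
  have hf : ∀ p q, R p q → f p = q := by
    intro p q h
    have h' : ∃ q, R p q := ⟨q, h⟩
    simp only [f, dif_pos h']
    exact h1 p _ _ h'.choose_spec h
  obtain ⟨g, hg⟩ := Set.MapsTo.exists_equiv_extend_of_card_eq (α := X) (t := (Finset.univ : Finset X))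
    (by simp) (s := s) (f := f) (fun _ _ => by simp) (by
      rintro p ⟨q, hq⟩ p' ⟨q', hq'⟩ h
      rw [hf _ _ hq, hf _ _ hq'] at h
      subst h
      exact h2 _ _ _ hq hq')
  refine ⟨g.trans (Equiv.subtypeUnivEquiv (by simp)), fun p q h => ?_⟩
  have := hg p ⟨q, h⟩
  simp [this, hf p q h]

open FreeGroup in
theorem fg_resid {α : Type} (g : FreeGroup α) (hg : g ≠ 1) :
    ∃ (Q : Type) (_ : Group Q) (_ : Finite Q) (φ : FreeGroup α →* Q), φ g ≠ 1 := by
  classical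
  set L := g.toWord with hLdef
  have hred : FreeGroup.IsReduced L := isReduced_toWord
  have hadj : ∀ i x b c, L[i]? = some (x, b) → L[i+1]? = some (x, c) → b = c := by
    intro i x b c h1 h2
    obtain ⟨hi, h1⟩ := List.getElem?_eq_some_iff.1 h1
    obtain ⟨hi', h2⟩ := List.getElem?_eq_some_iff.1 h2
    have := List.isChain_iff_getElem.1 hred i hi'
    rw [h1, h2] at this
    exact this rfl
  let m := L.length
  have hm : m ≠ 0 := by
    intro h
    exact hg (toWord_eq_nil_iff.1 (List.length_eq_zero_iff.1 h))
  let R : α → Fin (m+1) → Fin (m+1) → Prop := fun x p q =>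
    (L[q.1]? = some (x, true) ∧ p.1 = q.1 + 1) ∨ (L[p.1]? = some (x, false) ∧ q.1 = p.1 + 1)
  have hR : ∀ x, ∃ σ : Equiv.Perm (Fin (m+1)), ∀ p q, R x p q → σ p = q := by
    intro x
    apply exists_perm_extend
    · rintro p q q' (⟨h1, h2⟩ | ⟨h1, h2⟩) (⟨h3, h4⟩ | ⟨h3, h4⟩)
      · ext; omega
      · rw [h2] at h3; exact absurd (hadj _ _ _ _ h1 h3) (by simp)
      · rw [h4] at h1; exact absurd (hadj _ _ _ _ h3 h1) (by simp)
      · ext; omega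
    · rintro p p' q (⟨h1, h2⟩ | ⟨h1, h2⟩) (⟨h3, h4⟩ | ⟨h3, h4⟩)
      · ext; omega
      · rw [h4] at h1; exact absurd (hadj _ _ _ _ h3 h1) (by simp)
      · rw [h2] at h3; exact absurd (hadj _ _ _ _ h1 h3) (by simp)
      · ext; omega
  choose σ hσ using hR
  refine ⟨Equiv.Perm (Fin (m+1)), inferInstance, inferInstance, FreeGroup.lift σ, ?_⟩
  have key : ∀ j i : ℕ, (hi : i + j = m) →
      FreeGroup.lift σ (FreeGroup.mk (L.drop i)) (Fin.last m) = ⟨i, by omega⟩ := by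
    intro j
    induction j with
    | zero =>
      intro i hi
      have : L.drop i = [] := List.drop_eq_nil_of_le (by omega)
      rw [this, ← FreeGroup.one_eq_mk, _root_.map_one]
      ext; simp; omega
    | succ j ih =>
      intro i hi
      have hi' : i < L.length := by omega
      have h1 := ih (i+1) (by omega)
      rw [List.drop_eq_getElem_cons hi', ← List.singleton_append, ← FreeGroup.mul_mk, _root_.map_mul,
        Equiv.Perm.mul_apply, h1]
      obtain ⟨⟨x, b⟩, hb⟩ : ∃ y, L[i] = y := ⟨_, rfl⟩
      rw [hb]
      have hb' : L[i]? = some (x, b) := by rw [List.getElem?_eq_getElem hi', hb]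
      cases b with
      | true =>
        simp only [FreeGroup.lift_mk, List.map_cons, List.map_nil, List.prod_singleton, cond_true]
        exact hσ x _ _ (Or.inl ⟨hb', rfl⟩)
      | false =>
        simp only [FreeGroup.lift_mk, List.map_cons, List.map_nil, List.prod_singleton, cond_false]
        rw [Equiv.Perm.inv_eq_iff_eq]
        exact (hσ x _ _ (Or.inr ⟨hb', rfl⟩)).symm
  intro h
  have h0 := key m 0 (by omega)
  rw [List.drop_zero, hLdef, mk_toWord, h] at h0
  simp [Fin.ext_iff] at h0
  exact hm h0

theorem fg_resid_finset {α : Type} (T : Finset (FreeGroup α)) (hT : ∀ t ∈ T, t ≠ 1) :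
    ∃ (Q : Type) (_ : Group Q) (_ : Finite Q) (φ : FreeGroup α →* Q), ∀ t ∈ T, φ t ≠ 1 := by
  have h : ∀ t : T, ∃ (Q : Type) (_ : Group Q) (_ : Finite Q) (φ : FreeGroup α →* Q), φ t ≠ 1 :=
    fun t => fg_resid t.1 (hT t.1 t.2)
  choose Q i1 i2 φ hφ using h
  refine ⟨∀ t : T, Q t, inferInstance, inferInstance, MonoidHom.pi φ, fun t ht h => ?_⟩
  exact hφ ⟨t, ht⟩ (congrFun h ⟨t, ht⟩)

/-- The skew product action attached to an edge cochain `c`. -/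
def skewAct {α X R : Type} [AddCommGroup R] (ρ : FreeGroup α →* Equiv.Perm X) (c : X → α → R) :
    FreeGroup α →* Equiv.Perm (X × R) :=
  FreeGroup.lift fun x =>
    { toFun := fun p => (ρ (FreeGroup.of x) p.1, p.2 + c p.1 x)
      invFun := fun p => ((ρ (FreeGroup.of x))⁻¹ p.1, p.2 - c ((ρ (FreeGroup.of x))⁻¹ p.1) x)
      left_inv := fun p => by simp
      right_inv := fun p => by simp }

theorem skewAct_of {α X R : Type} [AddCommGroup R] (ρ : FreeGroup α →* Equiv.Perm X)
    (c : X → α → R) (x : α) (q : X) (t : R) :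
    skewAct ρ c (FreeGroup.of x) (q, t) = (ρ (FreeGroup.of x) q, t + c q x) := by
  simp [skewAct]

/-- `(ε, e, x)` is the (Fox) chain of the path of `w`. -/
def IsChn {α : Type} (w : FreeGroup α) {m : ℕ} (ε : Fin m → ℤ) (e : Fin m → FreeGroup α)
    (x : Fin m → α) : Prop :=
  ∀ (X R : Type) [AddCommGroup R] (ρ : FreeGroup α →* Equiv.Perm X) (c : X → α → R) (q : X) (t : R),
    skewAct ρ c w (q, t) = (ρ w q, t + ∑ k, ε k • c (ρ (e k) q) (x k))

theorem exists_chn_list {α : Type} (w : FreeGroup α) :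
    ∃ L : List (ℤ × FreeGroup α × α), ∀ (X R : Type) [AddCommGroup R]
      (ρ : FreeGroup α →* Equiv.Perm X) (c : X → α → R) (q : X) (t : R),
      skewAct ρ c w (q, t) = (ρ w q, t + (L.map fun y => y.1 • c (ρ y.2.1 q) y.2.2).sum) := by
  induction w using FreeGroup.induction_on with
  | C1 => exact ⟨[], by intros; simp⟩
  | of x => exact ⟨[(1, 1, x)], by intros; simp [skewAct_of]⟩
  | inv_of x _ =>
    refine ⟨[(-1, (FreeGroup.of x)⁻¹, x)], ?_⟩
    intro X R _ ρ c q t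
    rw [map_inv, Equiv.Perm.inv_eq_iff_eq, skewAct_of]
    simp
  | mul a b ha hb =>
    obtain ⟨La, ha⟩ := ha
    obtain ⟨Lb, hb⟩ := hb
    refine ⟨Lb ++ La.map (fun y => (y.1, y.2.1 * b, y.2.2)), ?_⟩
    intro X R _ ρ c q t
    rw [map_mul, Equiv.Perm.mul_apply, hb, ha]
    simp [Function.comp_def, add_assoc]

theorem exists_chn {α : Type} (w : FreeGroup α) :
    ∃ (m : ℕ) (ε : Fin m → ℤ) (e : Fin m → FreeGroup α) (x : Fin m → α), IsChn w ε e x := by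
  obtain ⟨L, hL⟩ := exists_chn_list w
  refine ⟨L.length, fun k => L[k].1, fun k => L[k].2.1, fun k => L[k].2.2, ?_⟩
  intro X R _ ρ c q t
  rw [hL, ← Fin.sum_univ_fun_getElem L (fun y => y.1 • c (ρ y.2.1 q) y.2.2)]
  rfl

open scoped Classical in
/-- squared length of the cycle of `u` in its cyclic cover -/
noncomputable def kap {α : Type} (u : FreeGroup α) {m : ℕ} (ε : Fin m → ℤ)
    (e : Fin m → FreeGroup α) (x : Fin m → α) : ℤ :=
  ∑ k, ∑ l, if x k = x l ∧ (e l)⁻¹ * e k ∈ Subgroup.zpowers u then ε k * ε l else 0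

/-- grouping lemma -/
theorem group_sum {β R : Type} [AddCommGroup R] [DecidableEq β] {m : ℕ} (ε : Fin m → ℤ)
    (p : Fin m → β) (h : ∑ k, ∑ l, (if p k = p l then ε k * ε l else 0) = 0) (c : β → R) :
    ∑ k, ε k • c (p k) = 0 := by
  let a : β → ℤ := fun b => ∑ k, if p k = b then ε k else 0
  let S := Finset.univ.image p
  have h1 : ∀ (M : Type) [AddCommGroup M] (c : β → M), ∑ k, ε k • c (p k) = ∑ b ∈ S, a b • c b := by
    intro M _ c
    simp only [a, Finset.sum_smul]
    rw [Finset.sum_comm]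
    refine Finset.sum_congr rfl fun k _ => ?_
    rw [Finset.sum_eq_single_of_mem (p k) (by simp [S])]
    · simp
    · intro b _ hb
      simp [hb.symm]
  have h2 : ∑ b ∈ S, a b * a b = 0 := by
    rw [← h]
    have := h1 ℤ a
    simp only [smul_eq_mul] at this
    rw [← this]
    refine Finset.sum_congr rfl fun k _ => ?_
    simp only [a, Finset.mul_sum]
    refine Finset.sum_congr rfl fun l _ => ?_
    by_cases hkl : p k = p l
    · simp [hkl]
    · simp [hkl, Ne.symm hkl]
  have h3 : ∀ b ∈ S, a b = 0 := by
    intro b hb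
    have := (Finset.sum_eq_zero_iff_of_nonneg (fun b _ => mul_self_nonneg (a b))).1 h2 b hb
    exact mul_self_eq_zero.1 this
  rw [h1]
  exact Finset.sum_eq_zero fun b hb => by rw [h3 b hb, zero_smul]

theorem kap_nonneg_aux {β : Type} [DecidableEq β] {m : ℕ} (ε : Fin m → ℤ)
    (p : Fin m → β) : 0 ≤ ∑ k, ∑ l, (if p k = p l then ε k * ε l else 0) := by
  have : ∑ k, ∑ l, (if p k = p l then ε k * ε l else 0)
      = ∑ b ∈ Finset.univ.image p, (∑ k, if p k = b then ε k else 0) ^ 2 := by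
    simp only [pow_two, Finset.sum_mul_sum]
    rw [Finset.sum_comm (s := Finset.univ.image p)]
    refine Finset.sum_congr rfl fun k _ => ?_
    rw [Finset.sum_comm]
    refine Finset.sum_congr rfl fun l _ => ?_
    rw [Finset.sum_eq_single_of_mem (p l) (by simp)]
    · simp
    · intro b _ hb
      simp [hb.symm]
  rw [this]
  exact Finset.sum_nonneg fun _ _ => sq_nonneg _

theorem kap_pos {α : Type} {u : FreeGroup α} (hu : u ≠ 1) {m : ℕ} {ε : Fin m → ℤ}
    {e : Fin m → FreeGroup α} {x : Fin m → α} (h : IsChn u ε e x) : 1 ≤ kap u ε e x := by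
  classical
  let Z := Subgroup.zpowers u
  let p : Fin m → (FreeGroup α ⧸ Z) × α := fun k => (QuotientGroup.mk (e k), x k)
  have hp : kap u ε e x = ∑ k, ∑ l, (if p k = p l then ε k * ε l else 0) := by
    unfold kap
    refine Finset.sum_congr rfl fun k _ => Finset.sum_congr rfl fun l _ => ?_
    refine if_congr ?_ rfl rfl
    simp only [p, Prod.mk.injEq]
    rw [and_comm, eq_comm (a := (QuotientGroup.mk (e k) : FreeGroup α ⧸ Z)), QuotientGroup.eq]
  have h0 : 0 ≤ kap u ε e x := by rw [hp]; exact kap_nonneg_aux ε p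
  rcases lt_or_eq_of_le h0 with h0 | h0
  · omega
  exfalso
  apply hu
  let s : FreeGroup α ⧸ Z → FreeGroup α := Quotient.out
  have hs : ∀ q, (QuotientGroup.mk (s q) : FreeGroup α ⧸ Z) = q := fun q => Quotient.out_eq _
  let ρ := MulAction.toPermHom (FreeGroup α) (FreeGroup α ⧸ Z)
  have hmem : ∀ w q, (s (ρ w q))⁻¹ * (w * s q) ∈ Z := by
    intro w q
    rw [← QuotientGroup.eq, hs]
    change w • q = _
    conv_lhs => rw [← hs q]
    rfl
  let _ : CommGroup Z := IsMulCommutative.instCommGroup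
  let c : FreeGroup α ⧸ Z → α → Additive Z := fun q y =>
    Additive.ofMul ⟨(s (ρ (FreeGroup.of y) q))⁻¹ * (FreeGroup.of y * s q), hmem _ _⟩
  have hc : ∀ w q t, skewAct ρ c w (q, t) =
      (ρ w q, t + Additive.ofMul ⟨(s (ρ w q))⁻¹ * (w * s q), hmem _ _⟩) := by
    intro w
    induction w using FreeGroup.induction_on with
    | C1 =>
      intro q t
      simp
    | of y => intro q t; rw [skewAct_of]
    | inv_of y _ =>
      intro q t
      rw [map_inv, Equiv.Perm.inv_eq_iff_eq, skewAct_of]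
      simp only [c]
      refine Prod.ext (by simp) ?_
      simp only
      rw [add_assoc, ← ofMul_mul]
      symm
      convert add_zero t
      rw [← ofMul_one]
      congr 1
      ext
      simp [mul_assoc]
    | mul a b ha hb =>
      intro q t
      rw [map_mul, Equiv.Perm.mul_apply, hb, ha]
      refine Prod.ext (by simp) ?_
      simp only
      rw [add_assoc, ← ofMul_mul, mul_comm (G := Z)]
      congr 2
      ext
      simp [mul_assoc]
  let q0 : FreeGroup α ⧸ Z := QuotientGroup.mk 1
  have hq0 : ∀ w, ρ w q0 = QuotientGroup.mk w := fun w => by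
    change w • q0 = _
    simp only [q0, MulAction.Quotient.smul_mk, smul_eq_mul, mul_one]
  have e1 := h _ _ ρ c q0 0
  have e2 := hc u q0 0
  rw [e1] at e2
  have e3 := congrArg Prod.snd e2
  simp only [zero_add, hq0] at e3
  have e4 := group_sum ε p (by rw [← hp, ← h0]) (fun b => c b.1 b.2)
  simp only [p] at e4
  rw [e4] at e3
  have e5 := congrArg (fun z => ((Additive.toMul z : Z) : FreeGroup α)) e3
  simp only [toMul_zero, toMul_ofMul, OneMemClass.coe_one] at e5
  have e6 : (QuotientGroup.mk u : FreeGroup α ⧸ Z) = QuotientGroup.mk 1 := by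
    rw [eq_comm, QuotientGroup.eq]; simp [Z]
  rw [e6] at e5
  have : u = s q0 * ((s q0)⁻¹ * (u * s q0)) * (s q0)⁻¹ := by group
  rw [this, ← e5]; group

theorem rank_ineq {ι E : Type} [Fintype ι] [NormedAddCommGroup E] [InnerProductSpace ℝ E]
    [FiniteDimensional ℝ E] (w : ι → ℝ) (a : ι → E) :
    (∑ k, w k * inner ℝ (a k) (a k)) ^ 2 ≤
      (Module.finrank ℝ E : ℝ) * ∑ k, ∑ l, w k * w l * (inner ℝ (a k) (a l)) ^ 2 := by
  classical
  let b := stdOrthonormalBasis ℝ E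
  have hb : ∀ x y : E, inner ℝ x y = ∑ i, inner ℝ x (b i) * inner ℝ (b i) y :=
    fun x y => (b.sum_inner_mul_inner x y).symm
  let T : Fin (Module.finrank ℝ E) → Fin (Module.finrank ℝ E) → ℝ :=
    fun i j => ∑ k, w k * (inner ℝ (a k) (b i) * inner ℝ (b j) (a k))
  have h1 : ∑ k, w k * inner ℝ (a k) (a k) = ∑ i, T i i := by
    simp only [T]
    rw [Finset.sum_comm]
    refine Finset.sum_congr rfl fun k _ => ?_
    rw [hb, Finset.mul_sum]
  have h2 : ∑ k, ∑ l, w k * w l * (inner ℝ (a k) (a l)) ^ 2 = ∑ i, ∑ j, T i j ^ 2 := by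
    have : ∀ k l, w k * w l * (inner ℝ (a k) (a l)) ^ 2 = ∑ i, ∑ j,
        (w k * (inner ℝ (a k) (b i) * inner ℝ (b j) (a k))) *
        (w l * (inner ℝ (a l) (b i) * inner ℝ (b j) (a l))) := by
      intro k l
      rw [pow_two]
      conv_lhs => rw [hb (a k) (a l)]
      rw [Finset.sum_mul_sum, Finset.mul_sum]
      refine Finset.sum_congr rfl fun i _ => ?_
      rw [Finset.mul_sum]
      refine Finset.sum_congr rfl fun j _ => ?_
      rw [real_inner_comm (a k) (b j), real_inner_comm (a l) (b i)]
      ring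
    simp only [this]
    simp only [pow_two, T, Finset.sum_mul_sum]
    calc _ = ∑ k, ∑ i, ∑ l, ∑ j, (w k * (inner ℝ (a k) (b i) * inner ℝ (b j) (a k))) *
        (w l * (inner ℝ (a l) (b i) * inner ℝ (b j) (a l))) :=
          Finset.sum_congr rfl fun k _ => Finset.sum_comm
      _ = ∑ i, ∑ k, ∑ l, ∑ j, (w k * (inner ℝ (a k) (b i) * inner ℝ (b j) (a k))) *
        (w l * (inner ℝ (a l) (b i) * inner ℝ (b j) (a l))) := Finset.sum_comm
      _ = ∑ i, ∑ k, ∑ j, ∑ l, (w k * (inner ℝ (a k) (b i) * inner ℝ (b j) (a k))) *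
        (w l * (inner ℝ (a l) (b i) * inner ℝ (b j) (a l))) :=
          Finset.sum_congr rfl fun i _ => Finset.sum_congr rfl fun k _ => Finset.sum_comm
      _ = _ := Finset.sum_congr rfl fun i _ => Finset.sum_comm
  rw [h1, h2]
  calc (∑ i, T i i) ^ 2 ≤ (Finset.univ.card : ℝ) * ∑ i, T i i ^ 2 := sq_sum_le_card_mul_sum_sq
    _ ≤ _ := by
      simp only [Finset.card_univ, Fintype.card_fin]
      gcongr with i
      exact Finset.single_le_sum (f := fun j => T i j ^ 2) (fun j _ => sq_nonneg _)
        (Finset.mem_univ i)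

theorem rank_ineq_sub {ι J : Type} [Fintype ι] [Fintype J] (w : ι → ℝ)
    (a : ι → EuclideanSpace ℝ J) (U : Submodule ℝ (EuclideanSpace ℝ J)) (ha : ∀ k, a k ∈ U) :
    (∑ k, w k * inner ℝ (a k) (a k)) ^ 2 ≤
      (Module.finrank ℝ U : ℝ) * ∑ k, ∑ l, w k * w l * (inner ℝ (a k) (a l)) ^ 2 :=
  rank_ineq (E := U) w (fun k => ⟨a k, ha k⟩)

section counting
open scoped Classical

/-- the cyclic subgroup as a finset -/
noncomputable def Zf {Q : Type} [Group Q] [Fintype Q] (a : Q) : Finset Q :=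
  Finset.univ.filter (· ∈ Subgroup.zpowers a)

theorem mem_Zf {Q : Type} [Group Q] [Fintype Q] {a y : Q} :
    y ∈ Zf a ↔ y ∈ Subgroup.zpowers a := by simp [Zf]

theorem Zf_eq {Q : Type} [Group Q] [Fintype Q] (a : Q) :
    Zf a = (Finset.range (orderOf a)).image (a ^ ·) := by
  ext y
  rw [mem_Zf, mem_zpowers_iff_mem_range_orderOf]

theorem sum_Zf {Q M : Type} [Group Q] [Fintype Q] [AddCommMonoid M] (a : Q) (f : Q → M) :
    ∑ y ∈ Zf a, f y = ∑ i ∈ Finset.range (orderOf a), f (a ^ i) := by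
  rw [Zf_eq, Finset.sum_image]
  intro i hi j hj h
  exact pow_injOn_Iio_orderOf (by simpa using hi) (by simpa using hj) h

theorem card_Zf {Q : Type} [Group Q] [Fintype Q] (a : Q) : (Zf a).card = orderOf a := by
  rw [Finset.card_eq_sum_ones, sum_Zf]; simp

theorem Zf_comm {Q : Type} [Group Q] [Fintype Q] {a y : Q} (h : y ∈ Zf a) : Commute y a := by
  obtain ⟨k, rfl⟩ := mem_Zf.1 h
  exact (Commute.refl a).zpow_left k

noncomputable def Ncnt {Q : Type} [Group Q] [Fintype Q] (a b s t g h : Q) : ℕ :=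
  ((Zf a ×ˢ Zf b).filter (fun y => s * y.1 * g = t * y.2 * h)).card

theorem Ncnt_le {Q : Type} [Group Q] [Fintype Q] (a b s t g h : Q) (D : ℕ)
    (hD : ∀ d, 1 ≤ d → d < D → ¬ Commute (s * a ^ d * s⁻¹) (t * b * t⁻¹)) :
    D * Ncnt a b s t g h ≤ orderOf a := by
  rw [← card_Zf a, Ncnt, ← Finset.card_range D, ← Finset.card_product]
  have key : ∀ y1 y2 z1 z2 : Q, y1 ∈ Zf a → y2 ∈ Zf a → z1 ∈ Zf b → z2 ∈ Zf b →
      s * y1 * g = t * z1 * h → s * y2 * g = t * z2 * h → ∀ d1 d2, d1 < d2 → d2 < D →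
      y1 * a ^ d1 = y2 * a ^ d2 → False := by
    intro y1 y2 z1 z2 hy1 hy2 hz1 hz2 e1 e2 d1 d2 h12 h2 h3
    apply hD (d2 - d1) (by omega) (by omega)
    have h4 : y1 = y2 * a ^ (d2 - d1) := by
      have : a ^ d2 = a ^ (d2 - d1) * a ^ d1 := by rw [← pow_add]; congr 1; omega
      rw [this, ← mul_assoc] at h3
      exact mul_right_cancel h3
    have h5 : a ^ (d2 - d1) = y1 * y2⁻¹ := by
      rw [h4, ((Zf_comm hy2).pow_right _).eq]; group
    have h6 : s * a ^ (d2 - d1) * s⁻¹ = t * (z1 * z2⁻¹) * t⁻¹ := by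
      rw [h5]
      calc s * (y1 * y2⁻¹) * s⁻¹ = (s * y1 * g) * (s * y2 * g)⁻¹ := by group
        _ = _ := by rw [e1, e2]; group
    rw [h6]
    have h7 : Commute (z1 * z2⁻¹) b := (Zf_comm hz1).mul_left (Zf_comm hz2).inv_left
    have h8 := h7.eq
    unfold Commute SemiconjBy
    calc t * (z1 * z2⁻¹) * t⁻¹ * (t * b * t⁻¹) = t * (z1 * z2⁻¹ * b) * t⁻¹ := by group
      _ = _ := by rw [h8]; group
  apply Finset.card_le_card_of_injOn (fun p => p.2.1 * a ^ p.1)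
  · rintro ⟨d, y, z⟩ hp
    simp only [Finset.coe_product, Set.mem_prod, Finset.mem_coe, Finset.mem_filter,
      Finset.mem_product] at hp
    rw [Finset.mem_coe, mem_Zf]
    exact Subgroup.mul_mem _ (mem_Zf.1 hp.2.1.1) (Subgroup.pow_mem _ (Subgroup.mem_zpowers a) _)
  · rintro ⟨d1, y1, z1⟩ hp1 ⟨d2, y2, z2⟩ hp2 he
    simp only [Finset.coe_product, Set.mem_prod, Finset.mem_coe, Finset.mem_filter,
      Finset.mem_product, Finset.mem_range] at hp1 hp2 he
    obtain ⟨hd1, ⟨hy1, hz1⟩, e1⟩ := hp1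
    obtain ⟨hd2, ⟨hy2, hz2⟩, e2⟩ := hp2
    rcases lt_trichotomy d1 d2 with hlt | rfl | hlt
    · exact (key y1 y2 z1 z2 hy1 hy2 hz1 hz2 e1 e2 d1 d2 hlt hd2 he).elim
    · have hy : y1 = y2 := mul_right_cancel he
      subst hy
      rw [e1] at e2
      have : z1 = z2 := mul_left_cancel (mul_right_cancel e2)
      rw [this]
    · exact (key y2 y1 z2 z1 hy2 hy1 hz2 hz1 e2 e1 d2 d1 hlt hd1 he.symm).elim

theorem Ncnt_sum {Q : Type} [Group Q] [Fintype Q] (a b s t g : Q) :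
    ∑ h, Ncnt a b s t g h = orderOf a * orderOf b := by
  simp only [Ncnt, Finset.card_filter]
  rw [Finset.sum_comm, ← card_Zf a, ← card_Zf b, ← Finset.card_product, Finset.card_eq_sum_ones]
  refine Finset.sum_congr rfl fun y _ => ?_
  have : ∀ h, (s * y.1 * g = t * y.2 * h) ↔ (h = (t * y.2)⁻¹ * (s * y.1 * g)) := fun h => by
    rw [eq_comm, eq_inv_mul_iff_mul_eq]
  simp [this]

theorem sq_bound {Q : Type} [Group Q] [Fintype Q] {m m' : ℕ} (a b g : Q) (s : Fin m → Q)
    (t : Fin m' → Q) (W : Fin m → Fin m' → ℕ) (D : ℕ)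
    (hD : ∀ k l, W k l ≠ 0 → ∀ d, 1 ≤ d → d < D →
      ¬ Commute (s k * a ^ d * (s k)⁻¹) (t l * b * (t l)⁻¹)) :
    D * ∑ h, (∑ k, ∑ l, W k l * Ncnt a b (s k) (t l) g h) ^ 2 ≤
      (∑ k, ∑ l, W k l) ^ 2 * (orderOf a) ^ 2 * orderOf b := by
  set R : Q → ℕ := fun h => ∑ k, ∑ l, W k l * Ncnt a b (s k) (t l) g h with hR
  set K := ∑ k, ∑ l, W k l with hK
  have h1 : ∀ h, D * R h ≤ K * orderOf a := by
    intro h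
    simp only [hR, hK, Finset.mul_sum, Finset.sum_mul]
    refine Finset.sum_le_sum fun k _ => Finset.sum_le_sum fun l _ => ?_
    by_cases hW : W k l = 0
    · simp [hW]
    · have := Ncnt_le a b (s k) (t l) g h D (hD k l hW)
      calc _ = W k l * (D * Ncnt a b (s k) (t l) g h) := by ring
        _ ≤ _ := Nat.mul_le_mul_left _ this
  have h2 : ∑ h, R h = K * (orderOf a * orderOf b) := by
    simp only [hR, hK]
    rw [Finset.sum_comm, Finset.sum_mul]
    refine Finset.sum_congr rfl fun k _ => ?_
    rw [Finset.sum_comm, Finset.sum_mul]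
    refine Finset.sum_congr rfl fun l _ => ?_
    rw [← Finset.mul_sum, Ncnt_sum]
  calc D * ∑ h, R h ^ 2 = ∑ h, (D * R h) * R h := by
        rw [Finset.mul_sum]; exact Finset.sum_congr rfl fun h _ => by ring
    _ ≤ ∑ h, (K * orderOf a) * R h := Finset.sum_le_sum fun h _ => Nat.mul_le_mul_right _ (h1 h)
    _ = _ := by rw [← Finset.mul_sum, h2]; ring

/-- the cycle of `a` through `g`, as an integral chain -/
noncomputable def zv {α Q : Type} [Group Q] [Fintype Q] {m : ℕ} (a : Q) (ε : Fin m → ℤ)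
    (s : Fin m → Q) (x : Fin m → α) (g : Q) : Q × α → ℤ :=
  fun p => ∑ y ∈ Zf a, ∑ k, if (s k * y * g, x k) = p then ε k else 0

theorem zv_sum {α Q R : Type} [Fintype α] [Group Q] [Fintype Q] [AddCommGroup R] {m : ℕ} (a : Q)
    (ε : Fin m → ℤ) (s : Fin m → Q) (x : Fin m → α) (g : Q) (c : Q × α → R) :
    ∑ p, zv a ε s x g p • c p = ∑ y ∈ Zf a, ∑ k, ε k • c (s k * y * g, x k) := by
  simp only [zv, Finset.sum_smul]
  rw [Finset.sum_comm]
  refine Finset.sum_congr rfl fun y _ => ?_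
  rw [Finset.sum_comm]
  refine Finset.sum_congr rfl fun k _ => ?_
  simp [ite_smul]

theorem zv_dot {α Q : Type} [Fintype α] [Group Q] [Fintype Q] {m m' : ℕ} (a b : Q)
    (ε : Fin m → ℤ) (s : Fin m → Q) (x : Fin m → α) (ε' : Fin m' → ℤ) (t : Fin m' → Q)
    (x' : Fin m' → α) (g h : Q) :
    ∑ p, zv a ε s x g p * zv b ε' t x' h p =
      ∑ k, ∑ l, if x k = x' l then ε k * ε' l * (Ncnt a b (s k) (t l) g h : ℤ) else 0 := by
  have h1 := zv_sum a ε s x g (zv b ε' t x' h)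
  simp only [smul_eq_mul] at h1
  rw [h1, Finset.sum_comm]
  refine Finset.sum_congr rfl fun k _ => ?_
  simp only [zv, Finset.mul_sum]
  rw [Finset.sum_congr rfl fun y _ => Finset.sum_comm, Finset.sum_comm]
  refine Finset.sum_congr rfl fun l _ => ?_
  rw [← Finset.sum_product', Ncnt, Finset.card_filter, Nat.cast_sum, Finset.mul_sum]
  by_cases hx : x k = x' l
  · simp only [hx, if_true, Prod.mk.injEq, and_true]
    refine Finset.sum_congr rfl fun y _ => ?_
    by_cases hy : s k * y.1 * g = t l * y.2 * h
    · simp [hy]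
    · simp [hy, Ne.symm hy]
  · simp [hx, Ne.symm hx]

theorem zv_inv {α Q : Type} [Group Q] [Fintype Q] {m : ℕ} (a : Q) (ε : Fin m → ℤ)
    (s : Fin m → Q) (x : Fin m → α) (g y : Q) (hy : y ∈ Zf a) :
    zv a ε s x (y * g) = zv a ε s x g := by
  funext p
  simp only [zv]
  refine Finset.sum_bij (fun z _ => z * y) ?_ ?_ ?_ ?_
  · intro z hz
    exact mem_Zf.2 (Subgroup.mul_mem _ (mem_Zf.1 hz) (mem_Zf.1 hy))
  · intro z _ z' _ h; exact mul_right_cancel h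
  · intro z hz
    exact ⟨z * y⁻¹, mem_Zf.2 (Subgroup.mul_mem _ (mem_Zf.1 hz) (Subgroup.inv_mem _ (mem_Zf.1 hy))),
      by group⟩
  · intro z _
    simp only [mul_assoc]

/-- left regular action through `φ` -/
noncomputable def regAct {α Q : Type} [Group Q] (φ : FreeGroup α →* Q) :
    FreeGroup α →* Equiv.Perm Q := (MulAction.toPermHom Q Q).comp φ

theorem regAct_apply {α Q : Type} [Group Q] (φ : FreeGroup α →* Q) (w : FreeGroup α) (q : Q) :
    regAct φ w q = φ w * q := rfl

theorem skew_pow {α Q R : Type} [Fintype α] [Group Q] [Fintype Q] [AddCommGroup R]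
    (φ : FreeGroup α →* Q) (u : FreeGroup α) {m : ℕ} {ε : Fin m → ℤ} {e : Fin m → FreeGroup α}
    {x : Fin m → α} (hu : IsChn u ε e x) (c : Q → α → R) (g : Q) (t : R) :
    skewAct (regAct φ) c (u ^ orderOf (φ u)) (g, t) =
      (g, t + ∑ p, zv (φ u) ε (fun k => φ (e k)) x g p • c p.1 p.2) := by
  have h1 : ∀ j, skewAct (regAct φ) c (u ^ j) (g, t) = (φ u ^ j * g,
      t + ∑ i ∈ Finset.range j, ∑ k, ε k • c (φ (e k) * (φ u) ^ i * g) (x k)) := by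
    intro j
    induction j with
    | zero => simp
    | succ j ih =>
      rw [pow_succ', map_mul, Equiv.Perm.mul_apply, ih, hu]
      simp only [regAct_apply, Finset.sum_range_succ, pow_succ', mul_assoc, add_assoc]
  rw [h1, pow_orderOf_eq_one, one_mul, zv_sum _ _ _ _ _ (fun p => c p.1 p.2), sum_Zf]

end counting

section dots
open scoped Classical

theorem Ncnt_full {Q : Type} [Group Q] [Fintype Q] (a s t g h : Q)
    (hst : t⁻¹ * s ∈ Subgroup.zpowers a) (hgh : h * g⁻¹ ∈ Subgroup.zpowers a) :
    Ncnt a a s t g h = orderOf a := by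
  rw [← card_Zf a, Ncnt]
  symm
  refine Finset.card_bij (fun y _ => (y, t⁻¹ * s * y * (h * g⁻¹)⁻¹)) ?_ ?_ ?_
  · intro y hy
    simp only [Finset.mem_filter, Finset.mem_product]
    refine ⟨⟨hy, ?_⟩, by group⟩
    rw [mem_Zf] at *
    exact Subgroup.mul_mem _ (Subgroup.mul_mem _ hst hy) (Subgroup.inv_mem _ hgh)
  · intro y _ y' _ he
    exact (Prod.mk.inj he).1
  · rintro ⟨y, z⟩ hyz
    simp only [Finset.mem_filter, Finset.mem_product] at hyz
    refine ⟨y, hyz.1.1, ?_⟩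
    have h1 := hyz.2
    have : t⁻¹ * s * y * (h * g⁻¹)⁻¹ = t⁻¹ * (s * y * g) * h⁻¹ := by group
    rw [Prod.mk.injEq]
    refine ⟨rfl, ?_⟩
    rw [this, h1]; group

theorem Ncnt_zero1 {Q : Type} [Group Q] [Fintype Q] (a s t g h : Q)
    (hst : t⁻¹ * s ∈ Subgroup.zpowers a) (hgh : h * g⁻¹ ∉ Subgroup.zpowers a) :
    Ncnt a a s t g h = 0 := by
  rw [Ncnt, Finset.card_eq_zero, Finset.filter_eq_empty_iff]
  rintro ⟨y, z⟩ hyz he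
  simp only [Finset.mem_product, mem_Zf] at hyz he
  apply hgh
  have : h * g⁻¹ = z⁻¹ * (t⁻¹ * s) * y := by
    have h1 : h = z⁻¹ * t⁻¹ * (t * z * h) := by group
    rw [h1, ← he]; group
  rw [this]
  exact Subgroup.mul_mem _ (Subgroup.mul_mem _ (Subgroup.inv_mem _ hyz.2) hst) hyz.1

theorem Ncnt_zero2 {Q : Type} [Group Q] [Fintype Q] (a s t g h : Q)
    (hst : ¬ Commute (s * a * s⁻¹) (t * a * t⁻¹)) (hgh : h * g⁻¹ ∈ Subgroup.zpowers a) :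
    Ncnt a a s t g h = 0 := by
  rw [Ncnt, Finset.card_eq_zero, Finset.filter_eq_empty_iff]
  rintro ⟨y, z⟩ hyz he
  simp only [Finset.mem_product, mem_Zf] at hyz he
  apply hst
  have h1 : t⁻¹ * s = z * (h * g⁻¹) * y⁻¹ := by
    have h1 : s = (s * y * g) * g⁻¹ * y⁻¹ := by group
    rw [h1, he]; group
  have h2 : t⁻¹ * s ∈ Subgroup.zpowers a := by
    rw [h1]
    exact Subgroup.mul_mem _ (Subgroup.mul_mem _ hyz.2 hgh) (Subgroup.inv_mem _ hyz.1)
  have h3 := (Zf_comm (mem_Zf.2 h2)).eq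
  have h4 : s * a * s⁻¹ = t * a * t⁻¹ := by
    calc s * a * s⁻¹ = t * ((t⁻¹ * s) * a) * s⁻¹ := by group
      _ = _ := by rw [h3]; group
  rw [h4]

theorem self_dot {α Q : Type} [Fintype α] [Group Q] [Fintype Q] {m : ℕ} (a : Q)
    (ε : Fin m → ℤ) (s : Fin m → Q) (x : Fin m → α) (P : Fin m → Fin m → Prop)
    (hP : ∀ k l, P k l → (s l)⁻¹ * s k ∈ Subgroup.zpowers a)
    (hP' : ∀ k l, ¬ P k l → ¬ Commute (s k * a * (s k)⁻¹) (s l * a * (s l)⁻¹))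
    (g h : Q) (hgh : h * g⁻¹ ∈ Subgroup.zpowers a) :
    ∑ p, zv a ε s x g p * zv a ε s x h p =
      orderOf a * ∑ k, ∑ l, if x k = x l ∧ P k l then ε k * ε l else 0 := by
  rw [zv_dot, Finset.mul_sum]
  refine Finset.sum_congr rfl fun k _ => ?_
  rw [Finset.mul_sum]
  refine Finset.sum_congr rfl fun l _ => ?_
  by_cases hx : x k = x l
  · by_cases hp : P k l
    · simp only [hx, hp, and_self, if_true, Ncnt_full a _ _ g h (hP k l hp) hgh]; ring
    · simp only [hx, hp, and_false, if_true, if_false,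
        Ncnt_zero2 a _ _ g h (hP' k l hp) hgh]; simp
  · simp [hx]

theorem abs_sum_bound {m m' : ℕ} (c : Fin m → Fin m' → Prop) (ε : Fin m → ℤ) (ε' : Fin m' → ℤ)
    (N : Fin m → Fin m' → ℕ) (W : Fin m → Fin m' → ℕ)
    (hW : ∀ k l, N k l ≠ 0 → (ε k).natAbs * (ε' l).natAbs ≤ W k l) :
    |∑ k, ∑ l, if c k l then ε k * ε' l * (N k l : ℤ) else 0| ≤
      ((∑ k, ∑ l, W k l * N k l : ℕ) : ℤ) := by
  push_cast
  refine (Finset.abs_sum_le_sum_abs _ _).trans (Finset.sum_le_sum fun k _ => ?_)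
  refine (Finset.abs_sum_le_sum_abs _ _).trans (Finset.sum_le_sum fun l _ => ?_)
  by_cases h0 : N k l = 0
  · simp [h0]
  have := hW k l h0
  split_ifs
  · rw [abs_mul, abs_mul, Nat.abs_cast]
    refine mul_le_mul_of_nonneg_right ?_ (by positivity)
    zify at this
    exact this
  · rw [abs_zero]; positivity

theorem cross_bound {α Q : Type} [Fintype α] [Group Q] [Fintype Q] {m m' : ℕ} (a b : Q)
    (ε : Fin m → ℤ) (s : Fin m → Q) (x : Fin m → α) (ε' : Fin m' → ℤ) (t : Fin m' → Q)
    (x' : Fin m' → α) (D K : ℕ) (hK : (∑ k, (ε k).natAbs) * (∑ l, (ε' l).natAbs) ≤ K)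
    (hD : ∀ k l, ∀ d, 1 ≤ d → d < D →
      ¬ Commute (s k * a ^ d * (s k)⁻¹) (t l * b * (t l)⁻¹)) (g : Q) :
    (D : ℤ) * ∑ h, (∑ p, zv a ε s x g p * zv b ε' t x' h p) ^ 2 ≤
      (K : ℤ) ^ 2 * (orderOf a) ^ 2 * orderOf b := by
  have h1 := sq_bound a b g s t (fun k l => (ε k).natAbs * (ε' l).natAbs) D
    (fun k l _ => hD k l)
  have h2 : ∑ k, ∑ l, (ε k).natAbs * (ε' l).natAbs ≤ K := by
    rw [← Finset.sum_mul_sum]; exact hK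
  have h3 : ∀ h, (∑ p, zv a ε s x g p * zv b ε' t x' h p) ^ 2 ≤
      (((∑ k, ∑ l, (ε k).natAbs * (ε' l).natAbs * Ncnt a b (s k) (t l) g h) ^ 2 : ℕ) : ℤ) := by
    intro h
    rw [zv_dot]
    have := abs_sum_bound (fun k l => x k = x' l) ε ε' (fun k l => Ncnt a b (s k) (t l) g h)
      (fun k l => (ε k).natAbs * (ε' l).natAbs) (fun _ _ _ => le_rfl)
    rw [Nat.cast_pow]
    rw [← sq_abs]
    exact pow_le_pow_left₀ (abs_nonneg _) this 2
  calc _ ≤ (D : ℤ) * ∑ h, (((∑ k, ∑ l, (ε k).natAbs * (ε' l).natAbs *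
          Ncnt a b (s k) (t l) g h) ^ 2 : ℕ) : ℤ) :=
        mul_le_mul_of_nonneg_left (Finset.sum_le_sum fun h _ => h3 h) (by positivity)
    _ ≤ (((∑ k, ∑ l, (ε k).natAbs * (ε' l).natAbs) ^ 2 * (orderOf a) ^ 2 * orderOf b : ℕ) : ℤ) := by
        exact_mod_cast h1
    _ ≤ _ := by
        norm_cast
        gcongr

theorem self_bound {α Q : Type} [Fintype α] [Group Q] [Fintype Q] {m : ℕ} (a : Q)
    (ε : Fin m → ℤ) (s : Fin m → Q) (x : Fin m → α) (P : Fin m → Fin m → Prop)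
    (D K : ℕ) (hK : (∑ k, (ε k).natAbs) * (∑ l, (ε l).natAbs) ≤ K) (hD2 : 2 ≤ D)
    (hP : ∀ k l, P k l → (s l)⁻¹ * s k ∈ Subgroup.zpowers a)
    (hP' : ∀ k l, ¬ P k l → ∀ d, 1 ≤ d → d < D →
      ¬ Commute (s k * a ^ d * (s k)⁻¹) (s l * a * (s l)⁻¹)) (g : Q) (κ : ℤ)
    (hκ : κ = ∑ k, ∑ l, if x k = x l ∧ P k l then ε k * ε l else 0) :
    (D : ℤ) * ∑ h, (∑ p, zv a ε s x g p * zv a ε s x h p) ^ 2 ≤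
      D * (orderOf a * (orderOf a * κ) ^ 2) + (K : ℤ) ^ 2 * (orderOf a) ^ 2 * orderOf a := by
  have hP1 : ∀ k l, ¬ P k l → ¬ Commute (s k * a * (s k)⁻¹) (s l * a * (s l)⁻¹) := by
    intro k l h
    have := hP' k l h 1 le_rfl (by omega)
    rwa [pow_one] at this
  set W : Fin m → Fin m → ℕ := fun k l => if P k l then 0 else (ε k).natAbs * (ε l).natAbs with hW
  have h1 := sq_bound a a g s s W D (by
    intro k l hkl
    apply hP'
    intro hp
    simp [hW, hp] at hkl)
  have h2 : ∑ k, ∑ l, W k l ≤ K := by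
    refine le_trans ?_ hK
    rw [Finset.sum_mul_sum]
    refine Finset.sum_le_sum fun k _ => Finset.sum_le_sum fun l _ => ?_
    simp only [hW]
    split_ifs
    · exact Nat.zero_le _
    · exact le_rfl
  have h3 : ∀ h, (∑ p, zv a ε s x g p * zv a ε s x h p) ^ 2 ≤
      (if h * g⁻¹ ∈ Subgroup.zpowers a then (orderOf a * κ) ^ 2 else 0) +
      (((∑ k, ∑ l, W k l * Ncnt a a (s k) (s l) g h) ^ 2 : ℕ) : ℤ) := by
    intro h
    by_cases hgh : h * g⁻¹ ∈ Subgroup.zpowers a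
    · rw [self_dot a ε s x P hP hP1 g h hgh, ← hκ, if_pos hgh]
      have : (0 : ℤ) ≤ (((∑ k, ∑ l, W k l * Ncnt a a (s k) (s l) g h) ^ 2 : ℕ) : ℤ) := by positivity
      linarith
    · rw [if_neg hgh, zero_add, zv_dot]
      have := abs_sum_bound (fun k l => x k = x l) ε ε (fun k l => Ncnt a a (s k) (s l) g h) W (by
        intro k l hN
        have : ¬ P k l := fun hp => hN (Ncnt_zero1 a _ _ g h (hP k l hp) hgh)
        simp [hW, this])
      rw [Nat.cast_pow, ← sq_abs]
      exact pow_le_pow_left₀ (abs_nonneg _) this 2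
  have h4 : ∑ h, (if h * g⁻¹ ∈ Subgroup.zpowers a then (orderOf a * κ) ^ 2 else 0) =
      orderOf a * (orderOf a * κ) ^ 2 := by
    rw [← Equiv.sum_comp (Equiv.mulRight g)]
    simp only [Equiv.coe_mulRight, mul_inv_cancel_right]
    rw [← Finset.sum_filter]
    rw [Finset.sum_const, nsmul_eq_mul]
    congr 2
    exact card_Zf a
  calc _ ≤ (D : ℤ) * ∑ h, ((if h * g⁻¹ ∈ Subgroup.zpowers a then (orderOf a * κ) ^ 2 else 0) +
      (((∑ k, ∑ l, W k l * Ncnt a a (s k) (s l) g h) ^ 2 : ℕ) : ℤ)) :=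
        mul_le_mul_of_nonneg_left (Finset.sum_le_sum fun h _ => h3 h) (by positivity)
    _ = D * (orderOf a * (orderOf a * κ) ^ 2) +
        ((D * ∑ h, (∑ k, ∑ l, W k l * Ncnt a a (s k) (s l) g h) ^ 2 : ℕ) : ℤ) := by
        rw [Finset.sum_add_distrib, h4]; push_cast; ring
    _ ≤ D * (orderOf a * (orderOf a * κ) ^ 2) +
        (((∑ k, ∑ l, W k l) ^ 2 * (orderOf a) ^ 2 * orderOf a : ℕ) : ℤ) := by
        gcongr
    _ ≤ _ := by
        push_cast
        gcongr
        exact_mod_cast h2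

end dots

section spans

set_option maxHeartbeats 1000000 in
theorem span_abs {Q J : Type} [Fintype Q] [Fintype J] (A B : Q → EuclideanSpace ℝ J)
    (n n' κ κ' D K q : ℝ) (hn : 0 < n) (hn' : 0 < n') (hκ : 1 ≤ κ) (hκ' : 1 ≤ κ')
    (hq : (Fintype.card Q : ℝ) = q) (hq0 : 0 < q) (hD0 : 0 < D) (hDK : 3 * K ^ 2 < D)
    (hAA : ∀ g, inner ℝ (A g) (A g) = n * κ) (hBB : ∀ g, inner ℝ (B g) (B g) = n' * κ')
    (hA2 : ∀ g, D * ∑ h, (inner ℝ (A g) (A h)) ^ 2 ≤ D * (n * (n * κ) ^ 2) + K ^ 2 * n ^ 2 * n)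
    (hB2 : ∀ g, D * ∑ h, (inner ℝ (B g) (B h)) ^ 2 ≤
      D * (n' * (n' * κ') ^ 2) + K ^ 2 * n' ^ 2 * n')
    (hAB : ∀ g, D * ∑ h, (inner ℝ (A g) (B h)) ^ 2 ≤ K ^ 2 * n ^ 2 * n')
    (U : Submodule ℝ (EuclideanSpace ℝ J)) (hAU : ∀ g, A g ∈ U) (hBU : ∀ g, B g ∈ U)
    (hf : (Module.finrank ℝ U : ℝ) * n ≤ q) (hf' : (Module.finrank ℝ U : ℝ) * n' ≤ q) : False := by
  have key := rank_ineq_sub (Sum.elim (fun _ : Q => 1 / (n ^ 2 * κ)) (fun _ : Q => 1 / (n' ^ 2 * κ')))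
    (Sum.elim A B) U (by rintro (g | g); exacts [hAU g, hBU g])
  simp only [Fintype.sum_sum_type, Sum.elim_inl, Sum.elim_inr, hAA, hBB, Finset.sum_const,
    Finset.card_univ, nsmul_eq_mul, hq, Finset.sum_add_distrib] at key
  have hsym : ∑ g, ∑ h, (inner ℝ (B g) (A h)) ^ 2 = ∑ g, ∑ h, (inner ℝ (A g) (B h)) ^ 2 := by
    rw [Finset.sum_comm]
    refine Finset.sum_congr rfl fun g _ => Finset.sum_congr rfl fun h _ => ?_
    rw [real_inner_comm]
  simp only [← Finset.mul_sum] at key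
  rw [hsym] at key
  have sA : D * ∑ g, ∑ h, (inner ℝ (A g) (A h)) ^ 2 ≤
      q * (D * (n * (n * κ) ^ 2) + K ^ 2 * n ^ 2 * n) := by
    rw [Finset.mul_sum, ← hq, ← Finset.card_univ, ← nsmul_eq_mul, ← Finset.sum_const]
    exact Finset.sum_le_sum fun g _ => hA2 g
  have sB : D * ∑ g, ∑ h, (inner ℝ (B g) (B h)) ^ 2 ≤
      q * (D * (n' * (n' * κ') ^ 2) + K ^ 2 * n' ^ 2 * n') := by
    rw [Finset.mul_sum, ← hq, ← Finset.card_univ, ← nsmul_eq_mul, ← Finset.sum_const]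
    exact Finset.sum_le_sum fun g _ => hB2 g
  have sAB : D * ∑ g, ∑ h, (inner ℝ (A g) (B h)) ^ 2 ≤ q * (K ^ 2 * n ^ 2 * n') := by
    rw [Finset.mul_sum, ← hq, ← Finset.card_univ, ← nsmul_eq_mul, ← Finset.sum_const]
    exact Finset.sum_le_sum fun g _ => hAB g
  set SA := ∑ g, ∑ h, (inner ℝ (A g) (A h)) ^ 2
  set SB := ∑ g, ∑ h, (inner ℝ (B g) (B h)) ^ 2
  set SAB := ∑ g, ∑ h, (inner ℝ (A g) (B h)) ^ 2
  set f : ℝ := (Module.finrank ℝ U : ℝ)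
  have hκ0 : 0 < κ := by linarith
  have hκ0' : 0 < κ' := by linarith
  set a := q / n with ha
  set b := q / n' with hb
  have ha0 : 0 < a := by positivity
  have hb0 : 0 < b := by positivity
  set δ := K ^ 2 / D with hδ
  have hδ0 : 0 ≤ δ := by positivity
  have hδ1 : 3 * δ < 1 := by
    rw [hδ, ← mul_div_assoc, div_lt_one hD0]; exact hDK
  have tA : 1 / (n ^ 2 * κ) * (1 / (n ^ 2 * κ)) * SA ≤ a * (1 + δ) := by
    have : SA ≤ q * (D * (n * (n * κ) ^ 2) + K ^ 2 * n ^ 2 * n) / D := by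
      rw [le_div_iff₀ hD0]; linarith
    calc _ ≤ 1 / (n ^ 2 * κ) * (1 / (n ^ 2 * κ)) *
          (q * (D * (n * (n * κ) ^ 2) + K ^ 2 * n ^ 2 * n) / D) := by gcongr
      _ = a * (1 + δ / κ ^ 2) := by rw [ha, hδ]; field_simp
      _ ≤ _ := by
        have : δ / κ ^ 2 ≤ δ := div_le_self hδ0 (one_le_pow₀ hκ)
        gcongr
  have tB : 1 / (n' ^ 2 * κ') * (1 / (n' ^ 2 * κ')) * SB ≤ b * (1 + δ) := by
    have : SB ≤ q * (D * (n' * (n' * κ') ^ 2) + K ^ 2 * n' ^ 2 * n') / D := by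
      rw [le_div_iff₀ hD0]; linarith
    calc _ ≤ 1 / (n' ^ 2 * κ') * (1 / (n' ^ 2 * κ')) *
          (q * (D * (n' * (n' * κ') ^ 2) + K ^ 2 * n' ^ 2 * n') / D) := by gcongr
      _ = b * (1 + δ / κ' ^ 2) := by rw [hb, hδ]; field_simp
      _ ≤ _ := by
        have : δ / κ' ^ 2 ≤ δ := div_le_self hδ0 (one_le_pow₀ hκ')
        gcongr
  have tAB : 1 / (n ^ 2 * κ) * (1 / (n' ^ 2 * κ')) * SAB ≤ b * δ := by
    have : SAB ≤ q * (K ^ 2 * n ^ 2 * n') / D := by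
      rw [le_div_iff₀ hD0]; linarith
    calc _ ≤ 1 / (n ^ 2 * κ) * (1 / (n' ^ 2 * κ')) * (q * (K ^ 2 * n ^ 2 * n') / D) := by gcongr
      _ = b * (δ / (κ * κ')) := by rw [hb, hδ]; field_simp
      _ ≤ _ := by
        have : δ / (κ * κ') ≤ δ := div_le_self hδ0 (by nlinarith)
        gcongr
  have e1 : q * (1 / (n ^ 2 * κ) * (n * κ)) + q * (1 / (n' ^ 2 * κ') * (n' * κ')) = a + b := by
    rw [ha, hb]; field_simp
  have f1 : f ≤ a := by rw [ha, le_div_iff₀ hn]; exact hf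
  have f2 : f ≤ b := by rw [hb, le_div_iff₀ hn']; exact hf'
  have f0 : 0 ≤ f := by positivity
  rw [e1] at key
  have key2 : (a + b) ^ 2 ≤ f * ((a + b) + δ * (a + 3 * b)) := by
    refine key.trans (mul_le_mul_of_nonneg_left ?_ f0)
    have : 1 / (n' ^ 2 * κ') * (1 / (n ^ 2 * κ)) * SAB ≤ b * δ := by
      rw [mul_comm (1 / (n' ^ 2 * κ'))]; exact tAB
    linarith
  have h3 : (a + b) + δ * (a + 3 * b) < 2 * (a + b) := by nlinarith
  have h4 : f * ((a + b) + δ * (a + 3 * b)) ≤ (a + b) / 2 * ((a + b) + δ * (a + 3 * b)) :=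
    mul_le_mul_of_nonneg_right (by linarith) (by positivity)
  have h5 : (a + b) / 2 * ((a + b) + δ * (a + 3 * b)) < (a + b) / 2 * (2 * (a + b)) :=
    mul_lt_mul_of_pos_left h3 (by positivity)
  have h6 : (a + b) / 2 * (2 * (a + b)) = (a + b) ^ 2 := by ring
  linarith

/-- integral functional separating a vector from a rational span -/
theorem exists_int_functional {ι J : Type} [Fintype J] (v : ι → J → ℤ) (w : J → ℤ)
    (hw : (fun j => (w j : ℚ)) ∉ Submodule.span ℚ (Set.range fun i => fun j => (v i j : ℚ))) :
    ∃ c : J → ℤ, (∀ i, ∑ j, v i j * c j = 0) ∧ ∑ j, w j * c j ≠ 0 := by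
  classical
  obtain ⟨f, hf2, hf1⟩ := Submodule.exists_le_ker_of_notMem hw
  have hf : ∀ y : J → ℚ, f y = ∑ j, y j * f (Pi.single j 1) := by
    intro y
    conv_lhs => rw [pi_eq_sum_univ' y]
    rw [map_sum]
    refine Finset.sum_congr rfl fun j _ => ?_
    rw [map_smul, smul_eq_mul]
  obtain ⟨b, hb⟩ := IsLocalization.exist_integer_multiples_of_finset (nonZeroDivisors ℤ)
    (Finset.univ.image fun j => f (Pi.single j 1))
  choose c hc using fun j => hb (f (Pi.single j 1)) (by simp)
  have hb0 : ((b : ℤ) : ℚ) ≠ 0 := by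
    have := nonZeroDivisors.coe_ne_zero b
    exact_mod_cast this
  have hc' : ∀ j, (c j : ℚ) = (b : ℤ) * f (Pi.single j 1) := by
    intro j
    have := hc j
    simpa [Submonoid.smul_def] using this
  have hs : ∀ y : J → ℤ, ((∑ j, y j * c j : ℤ) : ℚ) = (b : ℤ) * f (fun j => (y j : ℚ)) := by
    intro y
    rw [hf, Finset.mul_sum]
    push_cast
    refine Finset.sum_congr rfl fun j _ => ?_
    rw [hc']; ring
  refine ⟨c, fun i => ?_, ?_⟩
  · have h1 := hs (v i)
    have h2 : f (fun j => (v i j : ℚ)) = 0 := by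
      apply hf1
      exact Submodule.subset_span ⟨i, rfl⟩
    rw [h2, mul_zero] at h1
    exact_mod_cast h1
  · intro h0
    have h1 := hs w
    rw [h0] at h1
    rw [Int.cast_zero] at h1
    exact mul_ne_zero hb0 hf2 h1.symm

theorem span_cast {ι J : Type} [Fintype J] (v : ι → J → ℤ) (w : J → ℤ)
    (hw : (fun j => (w j : ℚ)) ∈ Submodule.span ℚ (Set.range fun i => fun j => (v i j : ℚ))) :
    (WithLp.toLp 2 (fun j => (w j : ℝ)) : EuclideanSpace ℝ J) ∈ Submodule.span ℝ
      (Set.range fun i => (WithLp.toLp 2 (fun j => (v i j : ℝ)) : EuclideanSpace ℝ J)) := by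
  have : ∀ y : J → ℚ, y ∈ Submodule.span ℚ (Set.range fun i => fun j => (v i j : ℚ)) →
      (WithLp.toLp 2 (fun j => (y j : ℝ)) : EuclideanSpace ℝ J) ∈ Submodule.span ℝ
      (Set.range fun i => (WithLp.toLp 2 (fun j => (v i j : ℝ)) : EuclideanSpace ℝ J)) := by
    intro y hy
    induction hy using Submodule.span_induction with
    | mem y hy =>
      obtain ⟨i, rfl⟩ := hy
      apply Submodule.subset_span
      exact ⟨i, by simp⟩
    | zero =>
      convert Submodule.zero_mem _ using 1
      ext j; simp
    | add y z _ _ hy hz =>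
      convert Submodule.add_mem _ hy hz using 1
      ext j; simp
    | smul a y _ hy =>
      convert Submodule.smul_mem _ (a : ℝ) hy using 1
      ext j; simp
  have h := this _ hw
  simpa using h

theorem finrank_orbit {Q E : Type} [Group Q] [Fintype Q] [AddCommGroup E] [Module ℝ E] (a : Q)
    (A : Q → E) (hA : ∀ y g, y ∈ Subgroup.zpowers a → A (y * g) = A g) :
    Module.finrank ℝ (Submodule.span ℝ (Set.range A)) * orderOf a ≤ Fintype.card Q := by
  classical
  have h1 : Set.range A = Set.range (fun q : Q ⧸ Subgroup.zpowers a => A (q.out⁻¹)) := by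
    ext y
    constructor
    · rintro ⟨g, rfl⟩
      refine ⟨((g⁻¹ : Q) : Q ⧸ Subgroup.zpowers a), ?_⟩
      obtain ⟨z, hz⟩ := QuotientGroup.mk_out_eq_mul (Subgroup.zpowers a) g⁻¹
      simp only
      rw [hz, mul_inv_rev, inv_inv]
      exact hA _ _ (Subgroup.inv_mem _ z.2)
    · rintro ⟨q, rfl⟩
      exact ⟨_, rfl⟩
  have h2 : Module.finrank ℝ (Submodule.span ℝ (Set.range A)) ≤
      Fintype.card (Q ⧸ Subgroup.zpowers a) := by
    rw [h1]; exact finrank_range_le_card _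
  have h3 := Subgroup.card_eq_card_quotient_mul_card_subgroup (Subgroup.zpowers a)
  rw [Nat.card_zpowers, Nat.card_eq_fintype_card, Nat.card_eq_fintype_card] at h3
  rw [h3]
  exact Nat.mul_le_mul_right _ h2

theorem inner_cast {J : Type} [Fintype J] (v w : J → ℤ) :
    inner ℝ (WithLp.toLp 2 (fun j => (v j : ℝ)) : EuclideanSpace ℝ J)
      (WithLp.toLp 2 (fun j => (w j : ℝ))) = ((∑ j, v j * w j : ℤ) : ℝ) := by
  simp [PiLp.inner_apply, mul_comm]

end spans

section main
open scoped Classical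

theorem fg_resid_comm {α ι : Type} [Finite ι] (p q : ι → FreeGroup α) (c : ι → Prop)
    (h : ∀ i, c i → ¬ Commute (p i) (q i)) :
    ∃ (Q : Type) (_ : Group Q) (_ : Finite Q) (φ : FreeGroup α →* Q),
      ∀ i, c i → ¬ Commute (φ (p i)) (φ (q i)) := by
  have := Fintype.ofFinite ι
  obtain ⟨Q, _, _, φ, hφ⟩ := fg_resid_finset
    ((Finset.univ.filter c).image fun i => p i * q i * (p i)⁻¹ * (q i)⁻¹) (by
      intro t ht
      obtain ⟨i, hi, rfl⟩ := Finset.mem_image.1 ht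
      intro h1
      refine h i (Finset.mem_filter.1 hi).2 ?_
      rw [mul_inv_eq_one, mul_inv_eq_iff_eq_mul] at h1
      exact h1)
  refine ⟨Q, _, ‹_›, φ, fun i hi hcm => ?_⟩
  refine hφ (p i * q i * (p i)⁻¹ * (q i)⁻¹) (Finset.mem_image.2 ⟨i, by simp [hi], rfl⟩) ?_
  simp only [map_mul, map_inv]
  rw [mul_inv_eq_one, mul_inv_eq_iff_eq_mul]
  exact hcm

theorem self_noncomm {α : Type} {r : FreeGroup α} (hr : IsRt r) (e f : FreeGroup α)
    (hef : f⁻¹ * e ∉ Subgroup.zpowers r) (d : ℕ) (hd : 1 ≤ d) :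
    ¬ Commute (e * r ^ d * e⁻¹) (f * r * f⁻¹) := by
  intro h
  have h1 := fg_noncomm hr hr e f d (by omega) h
  apply hef
  apply fg_inv_conj hr
  have h2 : f⁻¹ * e * r * (f⁻¹ * e)⁻¹ = f⁻¹ * (e * r * e⁻¹) * f := by group
  rw [h2]
  rcases h1 with h1 | h1
  · left; rw [h1]; group
  · right; rw [h1]; group

theorem cross_noncomm {α : Type} {r s : FreeGroup α} (hr : IsRt r) (hs : IsRt s)
    (hc : ∀ e, e * r * e⁻¹ ≠ s) (hc' : ∀ e, e * r * e⁻¹ ≠ s⁻¹) (e f : FreeGroup α)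
    (d : ℕ) (hd : 1 ≤ d) :
    ¬ Commute (e * r ^ d * e⁻¹) (f * s * f⁻¹) := by
  intro h
  have h1 := fg_noncomm hr hs e f d (by omega) h
  have h2 : f⁻¹ * e * r * (f⁻¹ * e)⁻¹ = f⁻¹ * (e * r * e⁻¹) * f := by group
  rcases h1 with h1 | h1
  · apply hc (f⁻¹ * e); rw [h2, h1]; group
  · apply hc' (f⁻¹ * e); rw [h2, h1]; group

theorem span_case {α : Type} [Fintype α] {r s : FreeGroup α} (hr : IsRt r) (hs : IsRt s)
    (hc : ∀ e, e * r * e⁻¹ ≠ s) (hc' : ∀ e, e * r * e⁻¹ ≠ s⁻¹)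
    {m m' : ℕ} {ε : Fin m → ℤ} {e : Fin m → FreeGroup α} {x : Fin m → α}
    {ε' : Fin m' → ℤ} {f : Fin m' → FreeGroup α} {x' : Fin m' → α}
    (h1 : IsChn r ε e x) (h2 : IsChn s ε' f x') :
    ∃ (Q : Type) (_ : Group Q) (_ : Fintype Q) (φ : FreeGroup α →* Q),
      (∃ h, (fun p => (zv (φ s) ε' (fun k => φ (f k)) x' h p : ℚ)) ∉ Submodule.span ℚ
        (Set.range fun g => fun p => (zv (φ r) ε (fun k => φ (e k)) x g p : ℚ))) ∨
      (∃ g, (fun p => (zv (φ r) ε (fun k => φ (e k)) x g p : ℚ)) ∉ Submodule.span ℚ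
        (Set.range fun h => fun p => (zv (φ s) ε' (fun k => φ (f k)) x' h p : ℚ))) := by
  set A := ∑ k, (ε k).natAbs with hA
  set B := ∑ k, (ε' k).natAbs with hB
  obtain ⟨K, hK⟩ : ∃ K, K = (A + B) ^ 2 := ⟨_, rfl⟩
  obtain ⟨D, hD⟩ : ∃ D, D = 3 * K ^ 2 + 2 := ⟨_, rfl⟩
  have hKA : A * A ≤ K := by rw [hK]; nlinarith
  have hKB : B * B ≤ K := by rw [hK]; nlinarith
  have hKAB : A * B ≤ K := by rw [hK]; nlinarith
  obtain ⟨Q, _, _, φ, hφ⟩ := fg_resid_comm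
    (ι := (Fin m × Fin m × Fin D) ⊕ (Fin m' × Fin m' × Fin D) ⊕ (Fin m × Fin m' × Fin D))
    (Sum.elim (fun i => e i.1 * r ^ (i.2.2 : ℕ) * (e i.1)⁻¹)
      (Sum.elim (fun i => f i.1 * s ^ (i.2.2 : ℕ) * (f i.1)⁻¹)
        (fun i => e i.1 * r ^ (i.2.2 : ℕ) * (e i.1)⁻¹)))
    (Sum.elim (fun i => e i.2.1 * r * (e i.2.1)⁻¹)
      (Sum.elim (fun i => f i.2.1 * s * (f i.2.1)⁻¹)
        (fun i => f i.2.1 * s * (f i.2.1)⁻¹)))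
    (Sum.elim (fun i => 1 ≤ (i.2.2 : ℕ) ∧ (e i.2.1)⁻¹ * e i.1 ∉ Subgroup.zpowers r)
      (Sum.elim (fun i => 1 ≤ (i.2.2 : ℕ) ∧ (f i.2.1)⁻¹ * f i.1 ∉ Subgroup.zpowers s)
        (fun i => 1 ≤ (i.2.2 : ℕ)))) (by
      rintro (⟨k, l, d⟩ | ⟨k, l, d⟩ | ⟨k, l, d⟩) hi
      · exact self_noncomm hr _ _ hi.2 _ hi.1
      · exact self_noncomm hs _ _ hi.2 _ hi.1
      · exact cross_noncomm hr hs hc hc' _ _ _ hi)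
  have hfin := Fintype.ofFinite Q
  refine ⟨Q, _, hfin, φ, ?_⟩
  by_contra hcon
  push Not at hcon
  obtain ⟨hc1, hc2⟩ := hcon
  have hP1 : ∀ k l, (e l)⁻¹ * e k ∈ Subgroup.zpowers r →
      (φ (e l))⁻¹ * φ (e k) ∈ Subgroup.zpowers (φ r) := by
    rintro k l ⟨j, hj⟩
    exact ⟨j, by simpa using congrArg φ hj⟩
  have hP2 : ∀ k l, (f l)⁻¹ * f k ∈ Subgroup.zpowers s →
      (φ (f l))⁻¹ * φ (f k) ∈ Subgroup.zpowers (φ s) := by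
    rintro k l ⟨j, hj⟩
    exact ⟨j, by simpa using congrArg φ hj⟩
  have hN1 : ∀ k l, ¬ (e l)⁻¹ * e k ∈ Subgroup.zpowers r → ∀ d, 1 ≤ d → d < D →
      ¬ Commute (φ (e k) * φ r ^ d * (φ (e k))⁻¹) (φ (e l) * φ r * (φ (e l))⁻¹) := by
    intro k l hkl d hd hdD
    have := hφ (Sum.inl (k, l, ⟨d, hdD⟩)) ⟨hd, hkl⟩
    simpa using this
  have hN2 : ∀ k l, ¬ (f l)⁻¹ * f k ∈ Subgroup.zpowers s → ∀ d, 1 ≤ d → d < D →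
      ¬ Commute (φ (f k) * φ s ^ d * (φ (f k))⁻¹) (φ (f l) * φ s * (φ (f l))⁻¹) := by
    intro k l hkl d hd hdD
    have := hφ (Sum.inr (Sum.inl (k, l, ⟨d, hdD⟩))) ⟨hd, hkl⟩
    simpa using this
  have hN3 : ∀ k l, ∀ d, 1 ≤ d → d < D →
      ¬ Commute (φ (e k) * φ r ^ d * (φ (e k))⁻¹) (φ (f l) * φ s * (φ (f l))⁻¹) := by
    intro k l d hd hdD
    have := hφ (Sum.inr (Sum.inr (k, l, ⟨d, hdD⟩))) hd
    simpa using this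
  have hD2 : 2 ≤ D := by omega
  have hκ := kap_pos hr.1 h1
  have hκ' := kap_pos hs.1 h2
  have b1 := self_bound (φ r) ε (fun k => φ (e k)) x
    (fun k l => (e l)⁻¹ * e k ∈ Subgroup.zpowers r) D K hKA hD2 hP1 hN1 (κ := kap r ε e x)
    (hκ := rfl)
  have b2 := self_bound (φ s) ε' (fun k => φ (f k)) x'
    (fun k l => (f l)⁻¹ * f k ∈ Subgroup.zpowers s) D K hKB hD2 hP2 hN2 (κ := kap s ε' f x')
    (hκ := rfl)
  have b3 := cross_bound (φ r) (φ s) ε (fun k => φ (e k)) x ε' (fun k => φ (f k)) x' D K hKAB hN3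
  have d1 := fun g => self_dot (φ r) ε (fun k => φ (e k)) x
    (fun k l => (e l)⁻¹ * e k ∈ Subgroup.zpowers r) hP1 (fun k l hkl => by
      simpa using hN1 k l hkl 1 le_rfl (by omega)) g g (by simp)
  have d2 := fun g => self_dot (φ s) ε' (fun k => φ (f k)) x'
    (fun k l => (f l)⁻¹ * f k ∈ Subgroup.zpowers s) hP2 (fun k l hkl => by
      simpa using hN2 k l hkl 1 le_rfl (by omega)) g g (by simp)
  change ∀ g, _ = _ * kap r ε e x at d1
  change ∀ g, _ = _ * kap s ε' f x' at d2
  have i1 : ∀ y g, y ∈ Subgroup.zpowers (φ r) → zv (φ r) ε (fun k => φ (e k)) x (y * g) =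
      zv (φ r) ε (fun k => φ (e k)) x g := fun y g hy => zv_inv _ _ _ _ _ _ (mem_Zf.2 hy)
  have i2 : ∀ y g, y ∈ Subgroup.zpowers (φ s) → zv (φ s) ε' (fun k => φ (f k)) x' (y * g) =
      zv (φ s) ε' (fun k => φ (f k)) x' g := fun y g hy => zv_inv _ _ _ _ _ _ (mem_Zf.2 hy)
  generalize zv (φ r) ε (fun k => φ (e k)) x = Z at *
  generalize zv (φ s) ε' (fun k => φ (f k)) x' = Z' at *
  let V : Q → EuclideanSpace ℝ (Q × α) := fun g => WithLp.toLp 2 (fun p => (Z g p : ℝ))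
  let V' : Q → EuclideanSpace ℝ (Q × α) := fun g => WithLp.toLp 2 (fun p => (Z' g p : ℝ))
  have s1 : ∀ h, V' h ∈ Submodule.span ℝ (Set.range V) := fun h => span_cast Z (Z' h) (hc1 h)
  have s2 : ∀ h, V h ∈ Submodule.span ℝ (Set.range V') := fun h => span_cast Z' (Z h) (hc2 h)
  have s3 : Submodule.span ℝ (Set.range V') = Submodule.span ℝ (Set.range V) := by
    apply le_antisymm <;> rw [Submodule.span_le] <;> rintro _ ⟨g, rfl⟩
    exacts [s1 g, s2 g]
  have r1 := finrank_orbit (φ r) V (fun y g hy => by simp only [V, i1 y g hy])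
  have r2 := finrank_orbit (φ s) V' (fun y g hy => by simp only [V', i2 y g hy])
  rw [s3] at r2
  have hcard : 0 < Fintype.card Q := Fintype.card_pos_iff.2 ⟨1⟩
  refine span_abs V V' (orderOf (φ r)) (orderOf (φ s)) (kap r ε e x) (kap s ε' f x') D K
    (Fintype.card Q) (by exact_mod_cast orderOf_pos _) (by exact_mod_cast orderOf_pos _)
    (by exact_mod_cast hκ) (by exact_mod_cast hκ') rfl (by exact_mod_cast hcard)
    (by exact_mod_cast (by omega : 0 < D)) (by exact_mod_cast (by omega : 3 * K ^ 2 < D))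
    ?_ ?_ ?_ ?_ ?_ (Submodule.span ℝ (Set.range V)) (fun g => Submodule.subset_span ⟨g, rfl⟩) s1
    (by exact_mod_cast r1) (by exact_mod_cast r2)
  · intro g; simp only [V, inner_cast]; exact_mod_cast d1 g
  · intro g; simp only [V', inner_cast]; exact_mod_cast d2 g
  · intro g; simp only [V, inner_cast]; exact_mod_cast b1 g
  · intro g; simp only [V', inner_cast]; exact_mod_cast b2 g
  · intro g; simp only [V, V', inner_cast]; exact_mod_cast b3 g

end main

section final
open scoped Classical

theorem skew_pow_int {α Q : Type} [Fintype α] [Group Q] [Fintype Q]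
    (φ : FreeGroup α →* Q) (u : FreeGroup α) {m : ℕ} {ε : Fin m → ℤ} {e : Fin m → FreeGroup α}
    {x : Fin m → α} (hu : IsChn u ε e x) (c : Q × α → ℤ) (M : ℕ) (g : Q) (t : ZMod M) (j : ℕ) :
    skewAct (regAct φ) (fun q y => (c (q, y) : ZMod M)) (u ^ (orderOf (φ u) * j)) (g, t) =
      (g, t + ((j * ∑ p, zv (φ u) ε (fun k => φ (e k)) x g p * c p : ℤ) : ZMod M)) := by
  induction j with
  | zero => simp
  | succ j ih =>
    rw [mul_add, mul_one, add_comm, pow_add, map_mul, Equiv.Perm.mul_apply, ih,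
      skew_pow φ u hu]
    · congr 1
      rw [add_assoc]
      congr 1
      push_cast
      simp only [zsmul_eq_mul]
      ring

theorem order_case {α Q : Type} [Fintype α] [Group Q] [Fintype Q]
    (φ : FreeGroup α →* Q) (r s : FreeGroup α) {m m' : ℕ} {ε : Fin m → ℤ}
    {e : Fin m → FreeGroup α} {x : Fin m → α}
    {ε' : Fin m' → ℤ} {f : Fin m' → FreeGroup α} {x' : Fin m' → α}
    (h1 : IsChn r ε e x) (h2 : IsChn s ε' f x') (a b : ℤ) (hb : b ≠ 0)
    (hsp : ∃ h, (fun p => (zv (φ s) ε' (fun k => φ (f k)) x' h p : ℚ)) ∉ Submodule.span ℚ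
        (Set.range fun g => fun p => (zv (φ r) ε (fun k => φ (e k)) x g p : ℚ))) :
    ∃ (Q : Type) (_ : Group Q) (_ : Finite Q) (φ : FreeGroup α →* Q),
      orderOf (φ (r ^ a)) ≠ orderOf (φ (s ^ b)) := by
  obtain ⟨h, hh⟩ := hsp
  obtain ⟨c, hc1, hc2⟩ := exists_int_functional (fun g => zv (φ r) ε (fun k => φ (e k)) x g) _ hh
  set N : ℤ := ∑ p, zv (φ s) ε' (fun k => φ (f k)) x' h p * c p with hN
  set n := orderOf (φ r) with hn
  have hn0 : 0 < n := orderOf_pos _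
  obtain ⟨M, hM⟩ : ∃ M : ℕ, M = b.natAbs * n * N.natAbs + 1 := ⟨_, rfl⟩
  have : NeZero M := ⟨by omega⟩
  set ψ := skewAct (regAct φ) (fun q y => (c (q, y) : ZMod M)) with hψ
  refine ⟨Equiv.Perm (Q × ZMod M), inferInstance, inferInstance, ψ, fun heq => ?_⟩
  have hr1 : ψ (r ^ n) = 1 := by
    ext1 ⟨g, t⟩
    have := skew_pow_int φ r h1 c M g t 1
    rw [mul_one] at this
    rw [hψ, this, hc1]
    simp
  have hr2 : (ψ (r ^ a)) ^ n = 1 := by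
    rw [← map_pow, ← zpow_natCast, zpow_comm, zpow_natCast, map_zpow, hr1, one_zpow]
  have hs2 : (ψ (s ^ b)) ^ n = 1 := by
    rw [← orderOf_dvd_iff_pow_eq_one, ← heq, orderOf_dvd_iff_pow_eq_one]
    exact hr2
  have hs3 : (ψ s) ^ (b.natAbs * n) = 1 := by
    rw [map_zpow, ← zpow_natCast, ← zpow_mul] at hs2
    rw [← orderOf_dvd_iff_pow_eq_one]
    have := orderOf_dvd_iff_zpow_eq_one.2 hs2
    have := Int.natAbs_dvd_natAbs.2 this
    simpa [Int.natAbs_mul] using this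
  have hs4 := skew_pow_int φ s h2 c M h 0 (b.natAbs * n)
  rw [← hψ, ← hN, mul_comm, pow_mul, map_pow, map_pow, hs3, one_pow] at hs4
  have hs5 : (((b.natAbs * n : ℕ) * N : ℤ) : ZMod M) = 0 := by
    have := (Prod.mk.inj hs4).2
    simpa using this.symm
  rw [ZMod.intCast_zmod_eq_zero_iff_dvd] at hs5
  have := Int.natAbs_dvd_natAbs.2 hs5
  rw [Int.natAbs_mul, Int.natAbs_natCast, Int.natAbs_natCast] at this
  have hpos : 0 < b.natAbs * n * N.natAbs := by
    have := Int.natAbs_pos.2 hb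
    have := Int.natAbs_pos.2 hc2
    positivity
  have := Nat.le_of_dvd hpos this
  omega

theorem orderOf_zpow_natAbs {G : Type} [Group G] (x : G) (a : ℤ) :
    orderOf (x ^ a) = orderOf (x ^ a.natAbs) := by
  rcases Int.natAbs_eq a with h | h
  · conv_lhs => rw [h, zpow_natCast]
  · conv_lhs => rw [h, zpow_neg, zpow_natCast, orderOf_inv]

theorem commens_case {α : Type} [Fintype α] {r : FreeGroup α} (hr : IsRt r) (a b : ℤ)
    (ha : a ≠ 0) (hb : b ≠ 0) (hab : a.natAbs ≠ b.natAbs) :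
    ∃ (Q : Type) (_ : Group Q) (_ : Finite Q) (φ : FreeGroup α →* Q),
      orderOf (φ (r ^ a)) ≠ orderOf (φ (r ^ b)) := by
  obtain ⟨m, ε, e, x, h1⟩ := exists_chn r
  obtain ⟨Q, _, _, φ, hφ⟩ := fg_resid_comm (ι := Fin m × Fin m)
    (fun i => e i.1 * r ^ 1 * (e i.1)⁻¹) (fun i => e i.2 * r * (e i.2)⁻¹)
    (fun i => (e i.2)⁻¹ * e i.1 ∉ Subgroup.zpowers r)
    (fun i hi => self_noncomm hr _ _ hi 1 le_rfl)
  have hfin := Fintype.ofFinite Q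
  have d1 := self_dot (φ r) ε (fun k => φ (e k)) x
    (fun k l => (e l)⁻¹ * e k ∈ Subgroup.zpowers r) (by
      rintro k l ⟨j, hj⟩
      exact ⟨j, by simpa using congrArg φ hj⟩) (fun k l hkl => by
      simpa using hφ (k, l) hkl) 1 1 (by simp)
  change _ = _ * kap r ε e x at d1
  have hκ := kap_pos hr.1 h1
  set c := zv (φ r) ε (fun k => φ (e k)) x 1 with hc
  have hn0 : 0 < orderOf (φ r) := orderOf_pos _
  have hN : 0 < ∑ p, c p * c p := by
    rw [d1]
    have : (0 : ℤ) < orderOf (φ r) := by exact_mod_cast hn0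
    nlinarith
  obtain ⟨N, hN'⟩ := Int.eq_ofNat_of_zero_le hN.le
  have hN0 : 0 < N := by rw [hN'] at hN; exact_mod_cast hN
  have ha' := Int.natAbs_pos.2 ha
  have hb' := Int.natAbs_pos.2 hb
  obtain ⟨M, hM⟩ : ∃ M : ℕ, M = a.natAbs * b.natAbs * N := ⟨_, rfl⟩
  have : NeZero M := ⟨by rw [hM]; positivity⟩
  set ψ := skewAct (regAct φ) (fun q y => (c (q, y) : ZMod M)) with hψ
  refine ⟨Equiv.Perm (Q × ZMod M), inferInstance, inferInstance, ψ, ?_⟩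
  have hT0 : 0 < orderOf (ψ r) := orderOf_pos _
  have hT1 : ψ (r ^ orderOf (ψ r)) = 1 := by rw [map_pow, pow_orderOf_eq_one]
  set T := orderOf (ψ r) with hT
  have hnT : orderOf (φ r) ∣ T := by
    obtain ⟨m', ε', e', x', h2⟩ := exists_chn (r ^ T)
    have h3 := h2 Q (ZMod M) (regAct φ) (fun q y => (c (q, y) : ZMod M)) 1 0
    rw [← hψ, hT1] at h3
    have h4 := (Prod.mk.inj h3).1
    rw [regAct_apply, mul_one, map_pow] at h4
    exact orderOf_dvd_of_pow_eq_one h4.symm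
  have habT : a.natAbs * b.natAbs ∣ T := by
    obtain ⟨j, hj⟩ := hnT
    have h3 := skew_pow_int φ r h1 c M 1 0 j
    rw [← hψ, ← hj, hT1, ← hc, hN'] at h3
    have h4 : (((j : ℤ) * (N : ℤ) : ℤ) : ZMod M) = 0 := by
      have := (Prod.mk.inj h3).2
      simpa using this.symm
    rw [ZMod.intCast_zmod_eq_zero_iff_dvd] at h4
    have h5 : M ∣ j * N := by exact_mod_cast h4
    rw [hM] at h5
    rw [hj]
    exact Dvd.dvd.mul_left (Nat.dvd_of_mul_dvd_mul_right hN0 h5) _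
  have haT : a.natAbs ∣ T := (Dvd.intro _ rfl).trans habT
  have hbT : b.natAbs ∣ T := (Dvd.intro_left _ rfl).trans habT
  rw [map_zpow, map_zpow, orderOf_zpow_natAbs, orderOf_zpow_natAbs,
    orderOf_pow_of_dvd ha'.ne' haT, orderOf_pow_of_dvd hb'.ne' hbT, ← hT]
  intro h
  apply hab
  have e1 := Nat.div_mul_cancel haT
  have e2 := Nat.div_mul_cancel hbT
  rw [h, ← e2] at e1
  have : 0 < T / b.natAbs := Nat.div_pos (Nat.le_of_dvd hT0 hbT) hb'
  rw [e2] at e1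
  exact Nat.eq_of_mul_eq_mul_left this (e1.trans e2.symm)

theorem main_fin {α : Type} [Fintype α] (u v : FreeGroup α)
    (h1 : ¬ IsConj u v) (h2 : ¬ IsConj u v⁻¹) :
    ∃ (Q : Type) (_ : Group Q) (_ : Finite Q) (φ : FreeGroup α →* Q),
      orderOf (φ u) ≠ orderOf (φ v) := by
  by_cases hu : u = 1
  · have hv : v ≠ 1 := fun hv => h1 (by rw [hu, hv])
    obtain ⟨Q, _, _, φ, hφ⟩ := fg_resid v hv
    refine ⟨Q, _, ‹_›, φ, fun h => hφ ?_⟩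
    rw [hu, map_one, orderOf_one] at h
    exact orderOf_eq_one_iff.1 h.symm
  by_cases hv : v = 1
  · obtain ⟨Q, _, _, φ, hφ⟩ := fg_resid u hu
    refine ⟨Q, _, ‹_›, φ, fun h => hφ ?_⟩
    rw [hv, map_one, orderOf_one] at h
    exact orderOf_eq_one_iff.1 h
  obtain ⟨r, hr, a, ha, rfl⟩ := fg_exists_root u hu
  obtain ⟨s, hs, b, hb, rfl⟩ := fg_exists_root v hv
  by_cases hc : ∃ e, e * r * e⁻¹ = s ∨ e * r * e⁻¹ = s⁻¹
  · obtain ⟨e, he⟩ := hc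
    have hsb : s ^ b = e * r ^ b * e⁻¹ ∨ s ^ b = e * r ^ (-b) * e⁻¹ := by
      rcases he with he | he
      · left; rw [← he, conj_zpow]
      · right
        rw [← conj_zpow, he, inv_zpow', neg_neg]
    by_cases hab : a.natAbs = b.natAbs
    · exfalso
      have hab' := Int.natAbs_eq_natAbs_iff.1 hab
      have hinv : ∀ k : ℤ, (e * r ^ k * e⁻¹)⁻¹ = e * r ^ (-k) * e⁻¹ := by
        intro k; rw [zpow_neg]; group
      rcases hsb with hsb | hsb <;> rcases hab' with rfl | rfl
      · exact h1 (isConj_iff.2 ⟨e, hsb.symm⟩)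
      · exact h2 (isConj_iff.2 ⟨e, by rw [hsb, hinv]⟩)
      · exact h2 (isConj_iff.2 ⟨e, by rw [hsb, hinv, neg_neg]⟩)
      · exact h1 (isConj_iff.2 ⟨e, hsb.symm⟩)
    · obtain ⟨Q, _, _, φ, hφ⟩ := commens_case hr a b ha hb hab
      refine ⟨Q, _, ‹_›, φ, ?_⟩
      have hcj : ∀ w, orderOf (φ (e * w * e⁻¹)) = orderOf (φ w) := by
        intro w
        have := MulEquiv.orderOf_eq (MulAut.conj (φ e)) (φ w)
        rw [← this, MulAut.conj_apply, map_mul, map_mul, map_inv]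
      have : orderOf (φ (s ^ b)) = orderOf (φ (r ^ b)) := by
        rcases hsb with hsb | hsb
        · rw [hsb, hcj]
        · rw [hsb, hcj, zpow_neg, map_inv, orderOf_inv]
      rw [this]
      exact hφ
  · push Not at hc
    obtain ⟨m, ε, e, x, c1⟩ := exists_chn r
    obtain ⟨m', ε', f, x', c2⟩ := exists_chn s
    obtain ⟨Q, _, _, φ, hφ⟩ := span_case hr hs (fun e => (hc e).1) (fun e => (hc e).2) c1 c2
    rcases hφ with hφ | hφ
    · exact order_case φ r s c1 c2 a b hb hφ
    · obtain ⟨Q', i1, i2, ψ, hψ⟩ := order_case φ s r c2 c1 b a ha hφ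
      exact ⟨Q', i1, i2, ψ, hψ.symm⟩

theorem map_lift_of_supp {α : Type} (S : Finset α) (w : FreeGroup α)
    (hw : ∀ y ∈ w.toWord, y.1 ∈ S) :
    FreeGroup.map (Subtype.val : S → α)
      (FreeGroup.lift (fun a => if h : a ∈ S then FreeGroup.of (⟨a, h⟩ : S) else 1) w) = w := by
  conv_lhs => rw [← FreeGroup.mk_toWord (x := w)]
  conv_rhs => rw [← FreeGroup.mk_toWord (x := w)]
  generalize w.toWord = L at *
  induction L with
  | nil => rw [← FreeGroup.one_eq_mk, map_one, map_one]
  | cons y L ih =>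
    have e1 : FreeGroup.mk (y :: L) = FreeGroup.mk [y] * FreeGroup.mk L := by
      rw [FreeGroup.mul_mk]; rfl
    rw [e1, map_mul, map_mul, ih (fun z hz => hw z (List.mem_cons_of_mem _ hz))]
    congr 1
    have hy := hw y List.mem_cons_self
    obtain ⟨y, β⟩ := y
    simp only at hy
    cases β <;> simp [FreeGroup.lift_mk, hy, FreeGroup.of, FreeGroup.inv_mk, FreeGroup.invRev]

end final

theorem stmt12 {α : Type} (u v : FreeGroup α)
    (h1 : ¬ IsConj u v) (h2 : ¬ IsConj u v⁻¹) :
    ∃ (Q : Type) (_ : Group Q) (_ : Finite Q) (φ : FreeGroup α →* Q),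
      Function.Surjective φ ∧ orderOf (φ u) ≠ orderOf (φ v) := by
  classical
  let S : Finset α := (u.toWord.map Prod.fst).toFinset ∪ (v.toWord.map Prod.fst).toFinset
  have hu := map_lift_of_supp S u (fun y hy => Finset.mem_union_left _
    (List.mem_toFinset.2 (List.mem_map_of_mem hy)))
  have hv := map_lift_of_supp S v (fun y hy => Finset.mem_union_right _
    (List.mem_toFinset.2 (List.mem_map_of_mem hy)))
  set f : FreeGroup α →* FreeGroup S :=
    FreeGroup.lift (fun a => if h : a ∈ S then FreeGroup.of (⟨a, h⟩ : S) else 1) with hf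
  obtain ⟨Q, _, _, φ, hφ⟩ := main_fin (f u) (f v)
    (fun h => h1 (by
      have := (FreeGroup.map (Subtype.val : S → α)).map_isConj h
      rwa [hu, hv] at this))
    (fun h => h2 (by
      have := (FreeGroup.map (Subtype.val : S → α)).map_isConj h
      rwa [map_inv, hu, hv] at this))
  let ψ := φ.comp f
  refine ⟨ψ.range, inferInstance, inferInstance, ψ.rangeRestrict,
    ψ.rangeRestrict_surjective, fun h => hφ ?_⟩
  rw [← Subgroup.orderOf_coe, ← Subgroup.orderOf_coe] at h
  exact h
end

section
/- Let A₁ and B₁ be finite groups with a common cyclic subgroup identified via C₁ = ⟨c⟩ ≤ A₁ and D₁ = ⟨d⟩ ≤ B₁ with |c| = |d|. Then the amalgamated free product G₁ = A₁ *_{c=d} B₁ is residually finite. -/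
open Monoid

def fam2 (A B : Type) : Bool → Type
  | true => A
  | false => B

instance fam2Group (A B : Type) [Group A] [Group B] : ∀ i : Bool, Group (fam2 A B i)
  | true => inferInstanceAs (Group A)
  | false => inferInstanceAs (Group B)

/-- The maps from the infinite cyclic group `FreeGroup Unit` sending the
generator to `c` resp. `d`; since `orderOf c = orderOf d` their pushout is
the amalgamated free product `A₁ *_{c=d} B₁` over `⟨c⟩ = ⟨d⟩`. -/
def cycMaps {A B : Type} [Group A] [Group B] (c : A) (d : B) :
    ∀ i : Bool, FreeGroup Unit →* fam2 A B i
  | true => FreeGroup.lift fun _ => c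
  | false => FreeGroup.lift fun _ => d


/-- Equivariant partial matchings between free finite `C`-sets of equal size extend. -/
theorem aux_match {C Y Z : Type} [Group C] [Finite C] [Finite Y] [Finite Z]
    (ρ : C →* Equiv.Perm Y) (σ : C →* Equiv.Perm Z)
    (hρ : ∀ c y, ρ c y = y → c = 1) (hσ : ∀ c y, σ c y = y → c = 1)
    (hcard : Nat.card Y = Nat.card Z) (n : ℕ) :
    ∀ (U : Type) (act : C → U → U) (i : U → Y) (j : U → Z),
      Function.Injective i → Function.Injective j →
      (∀ c u, i (act c u) = ρ c (i u)) → (∀ c u, j (act c u) = σ c (j u)) →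
      Nat.card Y - Nat.card U = n →
      ∃ e : Y ≃ Z, (∀ c y, e (ρ c y) = σ c (e y)) ∧ ∀ u, e (i u) = j u := by
  induction n using Nat.strong_induction_on with
  | _ n ih =>
  intro U act i j hi hj hic hjc hn
  have : Finite U := Finite.of_injective i hi
  by_cases hs : Function.Surjective i
  · have hb : Function.Bijective i := ⟨hi, hs⟩
    have hUY : Nat.card U = Nat.card Y := Nat.card_congr (Equiv.ofBijective i hb)
    have hbj : Function.Bijective j :=
      (Nat.bijective_iff_injective_and_card j).2 ⟨hj, by rw [hUY, hcard]⟩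
    have key : ∀ u, ((Equiv.ofBijective i hb).symm.trans (Equiv.ofBijective j hbj)) (i u) = j u := by
      intro u
      have : (Equiv.ofBijective i hb).symm (i u) = u := by
        rw [Equiv.symm_apply_eq]; rfl
      simp [this]
    refine ⟨(Equiv.ofBijective i hb).symm.trans (Equiv.ofBijective j hbj), ?_, key⟩
    intro c y
    obtain ⟨u, rfl⟩ := hs y
    rw [← hic, key, key, hjc]
  · have hsj : ¬ Function.Surjective j := by
      intro hsj
      have h1 : Nat.card U = Nat.card Z := Nat.card_congr (Equiv.ofBijective j ⟨hj, hsj⟩)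
      exact hs ((Nat.bijective_iff_injective_and_card i).2 ⟨hi, by rw [h1, hcard]⟩).2
    simp only [Function.Surjective, not_forall, not_exists] at hs hsj
    obtain ⟨y, hy⟩ := hs
    obtain ⟨z, hz⟩ := hsj
    have inj : ∀ {W : Type} (τ : C →* Equiv.Perm W) (k : U → W) (w : W)
        (_ : ∀ c y, τ c y = y → c = 1) (_ : Function.Injective k)
        (_ : ∀ c u, k (act c u) = τ c (k u)) (_ : ∀ u, ¬ k u = w),
        Function.Injective (Sum.elim k (fun c : C => τ c w)) := by
      intro W τ k w hτ hk hkc hw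
      have h0 : ∀ u c, k u ≠ τ c w := by
        intro u c h
        apply hw (act c⁻¹ u)
        rw [hkc, h, map_inv]; simp
      refine hk.sumElim ?_ h0
      intro a b hab
      have : τ (b⁻¹ * a) w = w := by
        rw [map_mul, Equiv.Perm.mul_apply]
        simp only at hab
        rw [hab, map_inv]; simp
      have := hτ _ _ this
      exact (inv_mul_eq_one.1 this).symm
    have hi' := inj ρ i y hρ hi hic hy
    have hj' := inj σ j z hσ hj hjc hz
    have hcU : Nat.card (U ⊕ C) = Nat.card U + Nat.card C := Nat.card_sum
    have hle : Nat.card (U ⊕ C) ≤ Nat.card Y := Nat.card_le_card_of_injective _ hi'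
    have hCpos : 0 < Nat.card C := Nat.card_pos
    obtain ⟨e, he, heu⟩ := ih (Nat.card Y - Nat.card (U ⊕ C)) (by omega) (U ⊕ C)
      (fun c => Sum.map (act c) (fun x => c * x)) _ _ hi' hj'
      (by rintro c (u | u) <;> simp [hic]) (by rintro c (u | u) <;> simp [hjc]) rfl
    exact ⟨e, he, fun u => heu (Sum.inl u)⟩

theorem aux_coord {K G : Type} [Group K] [Group G] (f : K →* G) (hf : Function.Injective f) :
    ∃ (r : G → G) (k : G → K), (∀ u, u = f (k u) * r u) ∧ (∀ a u, r (f a * u) = r u) ∧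
      ∀ a u, k (f a * u) = a * k u := by
  let s : Setoid G :=
    { r := fun u v => ∃ a, u = f a * v
      iseqv :=
        { refl := fun u => ⟨1, by simp⟩
          symm := by rintro u v ⟨a, rfl⟩; exact ⟨a⁻¹, by simp⟩
          trans := by rintro u v w ⟨a, rfl⟩ ⟨b, rfl⟩; exact ⟨a * b, by simp [mul_assoc]⟩ } }
  have hr : ∀ u, ∃ a, u = f a * (Quotient.mk s u).out := fun u =>
    s.symm (Quotient.mk_out (s := s) u)
  choose k hk using hr
  have h2 : ∀ a u, (Quotient.mk s (f a * u)).out = (Quotient.mk s u).out := by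
    intro a u
    have : Quotient.mk s (f a * u) = Quotient.mk s u := Quotient.sound ⟨a, rfl⟩
    rw [this]
  refine ⟨fun u => (Quotient.mk s u).out, k, hk, h2, ?_⟩
  intro a u
  apply hf
  have h3 := hk (f a * u)
  rw [h2] at h3
  have h4 := hk u
  apply mul_right_cancel (b := (Quotient.mk s u).out)
  rw [← h3, map_mul, mul_assoc, ← h4]

def auxLeft (S A : Type) [Group A] : A →* Equiv.Perm (S × A) where
  toFun a := Equiv.prodCongr (Equiv.refl S) (Equiv.mulLeft a)
  map_one' := by ext x <;> simp
  map_mul' a b := by ext x <;> simp [mul_assoc]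

theorem auxLeft_apply {S A : Type} [Group A] (a : A) (x : S × A) :
    auxLeft S A a x = (x.1, a * x.2) := rfl

theorem aux_ext {A C G S Y : Type} [Group A] [Group C] [Group G] [Finite A] [Finite C]
    [Finite S] [Finite Y] (iA : A →* G) (hA : Function.Injective iA) (α : C →* A)
    (hα : Function.Injective α) (U X : Set G)
    (hUC : ∀ c, ∀ u ∈ U, iA (α c) * u ∈ U) (hX : ∀ x ∈ X, ∀ a, iA a * x ∈ U)
    (ρ : C →* Equiv.Perm Y) (hρ : ∀ c y, ρ c y = y → c = 1)
    (i : G → Y) (hi : Set.InjOn i U) (hic : ∀ c, ∀ u ∈ U, i (iA (α c) * u) = ρ c (i u))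
    (f : G → S) (hf : Set.InjOn f U) (hcard : Nat.card Y = Nat.card S * Nat.card A) :
    ∃ ρA : A →* Equiv.Perm Y, (∀ c, ρA (α c) = ρ c) ∧
      ∀ x ∈ X, ∀ a, i (iA a * x) = ρA a (i x) := by
  classical
  obtain ⟨rA, kA, hA1, hA2, hA3⟩ := aux_coord iA hA
  obtain ⟨rC, kC, hC1, hC2, hC3⟩ := aux_coord (iA.comp α) (hA.comp hα)
  simp only [MonoidHom.comp_apply] at hC1 hC2 hC3
  let P : G → Prop := fun u => ∃ a, iA a * u ∈ X
  have hP : ∀ a u, P (iA a * u) ↔ P u := by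
    intro a u
    constructor
    · rintro ⟨b, hb⟩; exact ⟨b * a, by simpa [mul_assoc] using hb⟩
    · rintro ⟨b, hb⟩; exact ⟨b * a⁻¹, by simpa [mul_assoc] using hb⟩
  have hPU : ∀ u, P u → u ∈ U := by
    rintro u ⟨a, ha⟩
    simpa using hX _ ha a⁻¹
  have hPr : ∀ u, P (rA u) ↔ P u := by
    intro u; conv_rhs => rw [hA1 u, hP]
  have hPc : ∀ u, P (rC u) ↔ P u := by
    intro u; conv_rhs => rw [hC1 u, hP]
  have hrCU : ∀ u ∈ U, rC u ∈ U := by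
    intro u hu
    have := hUC (kC u)⁻¹ u hu
    have h2 : iA (α (kC u)⁻¹) * u = rC u := by
      rw [map_inv, map_inv, inv_mul_eq_iff_eq_mul]; exact hC1 u
    rwa [h2] at this
  let j : G → S × A := fun u => if P u then (f (rA u), kA u) else (f (rC u), α (kC u))
  have hj1 : ∀ u, P u → j u = (f (rA u), kA u) := fun u h => if_pos h
  have hj2 : ∀ u, ¬ P u → j u = (f (rC u), α (kC u)) := fun u h => if_neg h
  have hjinj : Set.InjOn j U := by
    intro u hu v hv huv
    by_cases h1 : P u <;> by_cases h2 : P v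
    · rw [hj1 u h1, hj1 v h2, Prod.mk.injEq] at huv
      have := hf (hPU _ ((hPr u).2 h1)) (hPU _ ((hPr v).2 h2)) huv.1
      rw [hA1 u, hA1 v, this, huv.2]
    · rw [hj1 u h1, hj2 v h2, Prod.mk.injEq] at huv
      have := hf (hPU _ ((hPr u).2 h1)) (hrCU v hv) huv.1
      exact absurd ((hPc v).1 (this ▸ (hPr u).2 h1)) h2
    · rw [hj2 u h1, hj1 v h2, Prod.mk.injEq] at huv
      have := hf (hrCU u hu) (hPU _ ((hPr v).2 h2)) huv.1
      exact absurd ((hPc u).1 (this ▸ (hPr v).2 h2)) h1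
    · rw [hj2 u h1, hj2 v h2, Prod.mk.injEq] at huv
      have := hf (hrCU u hu) (hrCU v hv) huv.1
      rw [hC1 u, hC1 v, this, huv.2]
  have hjc : ∀ c u, j (iA (α c) * u) = auxLeft S A (α c) (j u) := by
    intro c u
    by_cases h : P u
    · rw [hj1 _ h, hj1 _ ((hP _ _).2 h), auxLeft_apply, hA2, hA3]
    · rw [hj2 _ h, hj2 _ (fun h' => h ((hP _ _).1 h')), auxLeft_apply, hC2, hC3, map_mul]
  have hjA : ∀ a u, P u → j (iA a * u) = auxLeft S A a (j u) := by
    intro a u h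
    rw [hj1 _ h, hj1 _ ((hP _ _).2 h), auxLeft_apply, hA2, hA3]
  obtain ⟨e, he, heu⟩ := aux_match ρ ((auxLeft S A).comp α) hρ
    (by
      intro c y h
      rw [MonoidHom.comp_apply, auxLeft_apply] at h
      have := congrArg Prod.snd h
      simp only [mul_eq_right] at this
      exact hα (by rw [this, map_one]))
    (by rw [hcard, Nat.card_prod]) _ U (fun c u => ⟨iA (α c) * u, hUC c u u.2⟩)
    (fun u => i u) (fun u => j u)
    (fun u v h => Subtype.ext (hi u.2 v.2 h)) (fun u v h => Subtype.ext (hjinj u.2 v.2 h))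
    (fun c u => hic c u u.2) (fun c u => hjc c u) rfl
  refine ⟨(e.symm.permCongrHom).toMonoidHom.comp (auxLeft S A), ?_, ?_⟩
  · intro c
    ext y
    change e.symm (auxLeft S A (α c) (e.symm.symm y)) = _
    rw [Equiv.symm_apply_eq, he]; rfl
  · intro x hx a
    change _ = e.symm (auxLeft S A a (e.symm.symm (i x)))
    have hxU : x ∈ U := by simpa using hX x hx 1
    rw [Equiv.eq_symm_apply, heu ⟨_, hX x hx a⟩, Equiv.symm_symm, heu ⟨x, hxU⟩]
    exact hjA a x ⟨1, by simpa using hx⟩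

/-- Finite permutation model of a finite piece of `G`. -/
theorem aux_model {A B C G : Type} [Group A] [Group B] [Group C] [Group G] [Finite A] [Finite B]
    [Finite C] (iA : A →* G) (hA : Function.Injective iA) (iB : B →* G)
    (hB : Function.Injective iB) (α : C →* A) (hα : Function.Injective α)
    (β : C →* B) (hβ : Function.Injective β) (hab : ∀ c, iA (α c) = iB (β c))
    (F : Set G) (hF : F.Finite) (hne : F.Nonempty) :
    ∃ (Y : Type) (_ : Finite Y) (ρA : A →* Equiv.Perm Y) (ρB : B →* Equiv.Perm Y) (i : G → Y),
      (∀ c, ρA (α c) = ρB (β c)) ∧ Set.InjOn i F ∧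
      (∀ x ∈ F, ∀ a, i (iA a * x) = ρA a (i x)) ∧
      (∀ x ∈ F, ∀ b, i (iB b * x) = ρB b (i x)) := by
  classical
  let U : Set G := Set.image2 (fun a x => iA a * x) Set.univ F ∪
    Set.image2 (fun b x => iB b * x) Set.univ F
  have hU : U.Finite := (Set.Finite.image2 _ Set.finite_univ hF).union
    (Set.Finite.image2 _ Set.finite_univ hF)
  have : Finite U := hU
  have hXA : ∀ x ∈ F, ∀ a, iA a * x ∈ U := fun x hx a => Or.inl ⟨a, trivial, x, hx, rfl⟩
  have hXB : ∀ x ∈ F, ∀ b, iB b * x ∈ U := fun x hx a => Or.inr ⟨a, trivial, x, hx, rfl⟩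
  have hFU : F ⊆ U := fun x hx => by simpa using hXA x hx 1
  have hUC : ∀ c, ∀ u ∈ U, iA (α c) * u ∈ U := by
    rintro c u (⟨a, -, x, hx, rfl⟩ | ⟨b, -, x, hx, rfl⟩)
    · simpa [mul_assoc] using hXA x hx (α c * a)
    · simpa [mul_assoc, hab] using hXB x hx (β c * b)
  obtain ⟨x0, hx0⟩ := hne
  let f : G → U := fun g => if h : g ∈ U then ⟨g, h⟩ else ⟨x0, hFU hx0⟩
  have hf : Set.InjOn f U := by
    intro u hu v hv h
    simp only [f, dif_pos hu, dif_pos hv, Subtype.mk.injEq] at h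
    exact h
  obtain ⟨r, k, h1, h2, h3⟩ := aux_coord (iA.comp α) (hA.comp hα)
  simp only [MonoidHom.comp_apply] at h1 h2 h3
  have hrU : ∀ u ∈ U, r u ∈ U := by
    intro u hu
    have := hUC (k u)⁻¹ u hu
    have h2 : iA (α (k u)⁻¹) * u = r u := by
      rw [map_inv, map_inv, inv_mul_eq_iff_eq_mul]; exact h1 u
    rwa [h2] at this
  let ρ : C →* Equiv.Perm ((U × B) × A) := (auxLeft (U × B) A).comp α
  have hρ : ∀ c y, ρ c y = y → c = 1 := by
    intro c y h
    change auxLeft (U × B) A (α c) y = y at h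
    rw [auxLeft_apply] at h
    have := congrArg Prod.snd h
    simp only [mul_eq_right] at this
    exact hα (by rw [this, map_one])
  let i : G → (U × B) × A := fun g => ((f (r g), 1), α (k g))
  have hi : Set.InjOn i U := by
    intro u hu v hv h
    simp only [i, Prod.mk.injEq, and_true] at h
    have := hf (hrU u hu) (hrU v hv) h.1
    rw [h1 u, h1 v, this, h.2]
  have hic : ∀ c, ∀ u ∈ U, i (iA (α c) * u) = ρ c (i u) := by
    intro c u hu
    change _ = auxLeft (U × B) A (α c) (i u)
    rw [auxLeft_apply]
    simp only [i, h2, h3, map_mul]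
  obtain ⟨ρA, hA1, hA2⟩ := aux_ext iA hA α hα U F hUC hXA ρ hρ i hi hic
    (S := U × B) (fun g => (f g, 1))
    (fun u hu v hv h => hf hu hv (congrArg Prod.fst h)) (by rw [Nat.card_prod])
  obtain ⟨ρB, hB1, hB2⟩ := aux_ext iB hB β hβ U F (fun c u hu => hab c ▸ hUC c u hu) hXB ρ hρ i hi
    (fun c u hu => hab c ▸ hic c u hu) (S := U × A) (fun g => (f g, 1))
    (fun u hu v hv h => hf hu hv (congrArg Prod.fst h))
    (by simp only [Nat.card_prod]; ring)
  exact ⟨_, inferInstance, ρA, ρB, i, fun c => by rw [hA1, hB1], hi.mono hFU, hA2, hB2⟩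

/-- A finite quotient in which both factors embed. -/
theorem aux_faithful {A B C : Type} [Group A] [Group B] [Group C] [Finite A] [Finite B]
    [Finite C] (α : C →* A) (hα : Function.Injective α)
    (β : C →* B) (hβ : Function.Injective β) :
    ∃ (Y : Type) (ρA : A →* Equiv.Perm Y) (ρB : B →* Equiv.Perm Y),
      (∀ c, ρA (α c) = ρB (β c)) ∧ Function.Injective ρA ∧ Function.Injective ρB := by
  have free : ∀ {S K : Type} [Group K] (γ : C →* K) (_ : Function.Injective γ) (c : C) (y : S × K),
      (auxLeft S K).comp γ c y = y → c = 1 := by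
    intro S K _ γ hγ c y h
    rw [MonoidHom.comp_apply, auxLeft_apply] at h
    have := congrArg Prod.snd h
    simp only [mul_eq_right] at this
    exact hγ (by rw [this, map_one])
  have inj : ∀ {S K : Type} [Group K] [Nonempty S], Function.Injective (auxLeft S K) := by
    intro S K _ ⟨s⟩ a b h
    have := congrArg Prod.snd (DFunLike.congr_fun h (s, 1))
    simpa [auxLeft_apply] using this
  obtain ⟨e, he, -⟩ := aux_match ((auxLeft B A).comp α) ((auxLeft A B).comp β)
    (free α hα) (free β hβ) (by rw [Nat.card_prod, Nat.card_prod, mul_comm]) _ PEmpty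
    (fun _ => id) PEmpty.elim PEmpty.elim (fun x => x.elim) (fun x => x.elim)
    (fun _ x => x.elim) (fun _ x => x.elim) rfl
  refine ⟨B × A, auxLeft B A, (e.symm.permCongrHom).toMonoidHom.comp (auxLeft A B), ?_, inj,
    (e.symm.permCongrHom).injective.comp inj⟩
  intro c
  ext1 y
  change _ = e.symm (auxLeft A B (β c) (e.symm.symm y))
  rw [Equiv.eq_symm_apply]
  exact he c y

/-- Extending homs on the factors to the pushout. -/
theorem aux_lift {A B Q : Type} [Group A] [Group B] [Group Q] (c : A) (d : B)
    (f : A →* Q) (g : B →* Q) (h : f c = g d) :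
    ∃ φ : PushoutI (cycMaps c d) →* Q,
      (∀ a : A, φ (PushoutI.of (φ := cycMaps c d) true a) = f a) ∧
      (∀ b : B, φ (PushoutI.of (φ := cycMaps c d) false b) = g b) := by
  let F : ∀ i : Bool, fam2 A B i →* Q := fun i => match i with
    | true => f
    | false => g
  refine ⟨PushoutI.lift F (FreeGroup.lift fun _ => f c) ?_, ?_, ?_⟩
  · rintro (_ | _)
    · ext; change g (FreeGroup.lift (fun _ => d) (FreeGroup.of _)) = _; simp [h]
    · ext; change f (FreeGroup.lift (fun _ => c) (FreeGroup.of _)) = _; simp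
  · intro a; exact PushoutI.lift_of _ _ _ _
  · intro a; exact PushoutI.lift_of _ _ _ _

theorem stmt13 {A₁ B₁ : Type} [Group A₁] [Group B₁] [Finite A₁] [Finite B₁]
    (c : A₁) (d : B₁) (h : orderOf c = orderOf d) :
    ∀ g : PushoutI (cycMaps c d), g ≠ 1 →
      ∃ (Q : Type) (_ : Group Q) (_ : Finite Q) (φ : PushoutI (cycMaps c d) →* Q),
        Function.Surjective φ ∧ φ g ≠ 1 := by
  intro g hg
  let iA : A₁ →* PushoutI (cycMaps c d) := PushoutI.of (φ := cycMaps c d) true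
  let iB : B₁ →* PushoutI (cycMaps c d) := PushoutI.of (φ := cycMaps c d) false
  have hcd : iA c = iB d := by
    have h1 := PushoutI.of_apply_eq_base (cycMaps c d) true (FreeGroup.of ())
    have h2 := PushoutI.of_apply_eq_base (cycMaps c d) false (FreeGroup.of ())
    have h3 : cycMaps c d true (FreeGroup.of ()) = c := by
      change FreeGroup.lift (fun _ => c) (FreeGroup.of ()) = c; simp
    have h4 : cycMaps c d false (FreeGroup.of ()) = d := by
      change FreeGroup.lift (fun _ => d) (FreeGroup.of ()) = d; simp
    rw [h3] at h1
    rw [h4] at h2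
    exact h1.trans h2.symm
  -- the amalgamated subgroup
  let c' : Subgroup.zpowers c := ⟨c, Subgroup.mem_zpowers c⟩
  let d' : Subgroup.zpowers d := ⟨d, Subgroup.mem_zpowers d⟩
  have hc' : ∀ x, x ∈ Subgroup.zpowers c' := by
    rintro ⟨x, n, rfl⟩; exact ⟨n, by ext; simp [c']⟩
  have hd' : ∀ x, x ∈ Subgroup.zpowers d' := by
    rintro ⟨x, n, rfl⟩; exact ⟨n, by ext; simp [d']⟩
  let ε := mulEquivOfOrderOfEq hc' hd' (by simpa [c', d'] using h)
  have hε : ε c' = d' := mulEquivOfOrderOfEq_apply_gen hc' hd' _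
  let α : Subgroup.zpowers c →* A₁ := (Subgroup.zpowers c).subtype
  let β : Subgroup.zpowers c →* B₁ := (Subgroup.zpowers d).subtype.comp ε.toMonoidHom
  have hα : Function.Injective α := Subtype.val_injective
  have hβ : Function.Injective β := Subtype.val_injective.comp ε.injective
  have hαc : α c' = c := rfl
  have hβc : β c' = d := by change ((ε c' : Subgroup.zpowers d) : B₁) = d; rw [hε]
  have hab : ∀ x, iA (α x) = iB (β x) := by
    intro x
    obtain ⟨n, rfl⟩ := hc' x
    simp only [map_zpow, hαc, hβc, hcd]
  obtain ⟨Y0, ρA0, ρB0, h0, hA0, hB0⟩ := aux_faithful α hα β hβ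
  obtain ⟨φ0, hφA, hφB⟩ := aux_lift c d ρA0 ρB0 (by simpa [hαc, hβc] using h0 c')
  have hA : Function.Injective iA := by
    intro a b hh
    apply hA0
    rw [← hφA, ← hφA]; exact congrArg φ0 hh
  have hB : Function.Injective iB := by
    intro a b hh
    apply hB0
    rw [← hφB, ← hφB]; exact congrArg φ0 hh
  have key : ∀ w : PushoutI (cycMaps c d), ∀ x, ∃ F : Set (PushoutI (cycMaps c d)), F.Finite ∧
      ∀ (Y : Type) (φ : PushoutI (cycMaps c d) →* Equiv.Perm Y) (i : PushoutI (cycMaps c d) → Y),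
        (∀ x ∈ F, ∀ a, i (iA a * x) = φ (iA a) (i x)) →
        (∀ x ∈ F, ∀ b, i (iB b * x) = φ (iB b) (i x)) → i (w * x) = φ w (i x) := by
    have hof : ∀ k y x, ∃ F : Set (PushoutI (cycMaps c d)), F.Finite ∧
      ∀ (Y : Type) (φ : PushoutI (cycMaps c d) →* Equiv.Perm Y) (i : PushoutI (cycMaps c d) → Y),
        (∀ x ∈ F, ∀ a, i (iA a * x) = φ (iA a) (i x)) →
        (∀ x ∈ F, ∀ b, i (iB b * x) = φ (iB b) (i x)) →
          i (PushoutI.of (φ := cycMaps c d) k y * x) = φ (PushoutI.of k y) (i x) := by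
      rintro (_ | _) y x
      · exact ⟨{x}, Set.finite_singleton x, fun Y φ i _ h2 => h2 x rfl y⟩
      · exact ⟨{x}, Set.finite_singleton x, fun Y φ i h1 _ => h1 x rfl y⟩
    intro w
    induction w using PushoutI.induction_on with
    | of k y => exact hof k y
    | base y =>
      rw [← PushoutI.of_apply_eq_base (cycMaps c d) true]
      exact hof _ _
    | mul u v hu hv =>
      intro x
      obtain ⟨F1, hF1, H1⟩ := hv x
      obtain ⟨F2, hF2, H2⟩ := hu (v * x)
      refine ⟨F1 ∪ F2, hF1.union hF2, ?_⟩
      intro Y φ i ha hb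
      rw [mul_assoc, H2 Y φ i (fun x hx => ha x (Or.inr hx)) (fun x hx => hb x (Or.inr hx)),
        H1 Y φ i (fun x hx => ha x (Or.inl hx)) (fun x hx => hb x (Or.inl hx)), map_mul]
      rfl
  obtain ⟨F, hF, H⟩ := key g 1
  obtain ⟨Y, hY, ρA, ρB, i, hρ, hi, h1, h2⟩ := aux_model iA hA iB hB α hα β hβ hab
    (F ∪ {1, g}) (hF.union (by simp)) ⟨1, by simp⟩
  obtain ⟨φ, hφA, hφB⟩ := aux_lift c d ρA ρB (by simpa [hαc, hβc] using hρ c')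
  have hgi : i (g * 1) = φ g (i 1) := by
    apply H Y φ i
    · intro x hx a; rw [h1 x (Or.inl hx)]; exact congrArg (fun p => p (i x)) (hφA a).symm
    · intro x hx a; rw [h2 x (Or.inl hx)]; exact congrArg (fun p => p (i x)) (hφB a).symm
  refine ⟨φ.range, inferInstance, inferInstance, φ.rangeRestrict, φ.rangeRestrict_surjective, ?_⟩
  intro hφ
  have hφ' : φ g = 1 := congrArg Subtype.val hφ
  rw [hφ', mul_one, Equiv.Perm.one_apply] at hgi
  exact hg (hi (by simp) (by simp) hgi)
end
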